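/- arXiv:2212.11463 — 2 statements merged into one kernel-verified Lean document; each statement's English description precedes it below -/
import Mathlib

section
/- Let n ≥ 2 and 𝐚 = (a₁,a₂) ∈ [1,∞)², and set ω_𝐚(y) = (1−|y|^{a₁})^{1/a₂} and ω̃_𝐚(z) = (1−|z|^{a₂})^{1/a₁}. There are constants c, C > 0 depending only on n and 𝐚 such that for all nonnegative measurable f, g on ℝⁿ, all x ∈ ℝⁿ and all t₁, t₂ > 0: c · J ≤ 𝒜^𝐚_{(t₁,t₂)}(f,g)(x) ≤ C · J, where J = ∫_{|y|<1} f(x−t₁y) 𝔄g(x, t₂ ω_𝐚(y)) ω_𝐚(y)^{n−a₂} dy; and likewise c · J̃ ≤ 𝒜^𝐚_{(t₁,t₂)}(f,g)(x) ≤ C · J̃ with J̃ = ∫_{|z|<1} g(x−t₂z) 𝔄f(x, t₁ ω̃_𝐚(z)) ω̃_𝐚(z)^{n−a₁} dz. -/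
open MeasureTheory Metric Set
open scoped ENNReal NNReal

noncomputable section

abbrev Rn (n : ℕ) : Type := EuclideanSpace ℝ (Fin n)

/-- The degenerate surface `S₂^𝐚 = {(y,z) : |y|^{a₁} + |z|^{a₂} = 1} ⊆ ℝⁿ × ℝⁿ`. -/
def S2 (n : ℕ) (a₁ a₂ : ℝ) : Set (Rn n × Rn n) := {p | ‖p.1‖ ^ a₁ + ‖p.2‖ ^ a₂ = 1}

/-- The normalized surface measure on `S₂^𝐚`, realized as the normalized
`(2n-1)`-dimensional Hausdorff measure restricted to the surface. -/
def μS2 (n : ℕ) (a₁ a₂ : ℝ) : Measure (Rn n × Rn n) :=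
  (μH[(2 * (n : ℝ) - 1)] (S2 n a₁ a₂))⁻¹ • (μH[(2 * (n : ℝ) - 1)]).restrict (S2 n a₁ a₂)

/-- The bilinear average `𝒜^𝐚_{(t₁,t₂)}(f,g)(x)` of nonnegative functions,
as an `ℝ≥0∞`-valued integral. -/
def biAvgE (n : ℕ) (a₁ a₂ : ℝ) (f g : Rn n → ℝ) (t₁ t₂ : ℝ) (x : Rn n) : ℝ≥0∞ :=
  ∫⁻ p, ENNReal.ofReal (f (x - t₁ • p.1)) * ENNReal.ofReal (g (x - t₂ • p.2)) ∂(μS2 n a₁ a₂)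

/-- Surface measure on the unit sphere `𝕊^{n-1} ⊆ ℝⁿ`: the `(n-1)`-dimensional
Hausdorff measure restricted to the sphere. -/
def μSph (n : ℕ) : Measure (Rn n) :=
  (μH[((n : ℝ) - 1)]).restrict (sphere (0 : Rn n) 1)

/-- The spherical average `𝔄g(x,t) = ∫_{𝕊^{n-1}} g(x - tθ) dσ(θ)` for nonnegative `g`. -/
def sphAvgE (n : ℕ) (g : Rn n → ℝ) (x : Rn n) (t : ℝ) : ℝ≥0∞ :=
  ∫⁻ θ, ENNReal.ofReal (g (x - t • θ)) ∂(μSph n)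

/-- The weight `ω_𝐚(y) = (1 - |y|^{a₁})^{1/a₂}`. -/
def omegaW (a₁ a₂ : ℝ) {n : ℕ} (y : Rn n) : ℝ := (1 - ‖y‖ ^ a₁) ^ (1 / a₂)

/-- The sliced integral
`J = ∫_{|y|<1} f(x - t₁y) 𝔄g(x, t₂ ω_𝐚(y)) ω_𝐚(y)^{n - a₂} dy`. -/
def Jslice (n : ℕ) (a₁ a₂ : ℝ) (f g : Rn n → ℝ) (t₁ t₂ : ℝ) (x : Rn n) : ℝ≥0∞ :=
  ∫⁻ y in ball (0 : Rn n) 1,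
    ENNReal.ofReal (f (x - t₁ • y)) * sphAvgE n g x (t₂ * omegaW a₁ a₂ y) *
      ENNReal.ofReal ((omegaW a₁ a₂ y) ^ ((n : ℝ) - a₂))

/-!
Write `N(y, z) = |y|^{a₁} + |z|^{a₂}`. Under the dilations `(t^{1/a₁} y, t^{1/a₂} z)`, for which `N`
is homogeneous of degree one, the shell `1 ≤ N ≤ 2` is bi-Lipschitz to `{N = 1} × [1, 2]`. Hence
Hausdorff measure on `{N = 1}` is comparable with the cone measure, which assigns to a set the
Lebesgue measure of the cone over it inside the shell. Conversely, polar coordinates in `z`, the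
substitution `t = |y|^{a₁} + s^{a₂}` in the radius `s = |z|` and a rescaling of `y` by `t^{1/a₁}`
disintegrate Lebesgue measure along the same dilations, with angular part a multiple of
`ω_𝐚(y)^{n - a₂} dy dσ(θ)` on the points `(y, ω_𝐚(y) θ)`; so this is the cone measure up to a
constant. Here `σ` is the angular measure of polar coordinates, and the first argument applied to
the Euclidean norm compares it with Hausdorff measure on the sphere.
-/

/-! ### Comparable measures -/

/-- Two measures are comparable if each is bounded by a finite multiple of the other. -/
def ComparableMeasures {α : Type*} [MeasurableSpace α] (μ ν : Measure α) : Prop :=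
  ∃ C : ℝ≥0, μ ≤ C • ν ∧ ν ≤ C • μ

namespace ComparableMeasures

variable {α β : Type*} [MeasurableSpace α] [MeasurableSpace β] {μ ν ρ : Measure α}

lemma of_le_smul {C D : ℝ≥0} (hμ : μ ≤ C • ν) (hν : ν ≤ D • μ) : ComparableMeasures μ ν :=
  ⟨max C D, hμ.trans (by gcongr; exact le_max_left C D),
    hν.trans (by gcongr; exact le_max_right C D)⟩

lemma symm (h : ComparableMeasures μ ν) : ComparableMeasures ν μ :=
  let ⟨C, hμ, hν⟩ := h
  ⟨C, hν, hμ⟩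

lemma trans (hμν : ComparableMeasures μ ν) (hνρ : ComparableMeasures ν ρ) :
    ComparableMeasures μ ρ := by
  obtain ⟨C, hμ, hν⟩ := hμν
  obtain ⟨D, hν', hρ⟩ := hνρ
  refine of_le_smul (C := C * D) (D := D * C) ?_ ?_
  · rw [mul_smul]
    exact hμ.trans (by gcongr)
  · rw [mul_smul]
    exact hρ.trans (by gcongr)

lemma smul_self {c : ℝ≥0∞} (hc : c ≠ 0) (hc' : c ≠ ∞) (μ : Measure α) :
    ComparableMeasures (c • μ) μ := by
  lift c to ℝ≥0 using hc'
  rw [ENNReal.coe_ne_zero] at hc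
  exact of_le_smul (C := c) (D := c⁻¹) le_rfl (by rw [← ENNReal.smul_def, inv_smul_smul₀ hc])

lemma map (h : ComparableMeasures μ ν) {f : α → β} (hf : Measurable f) :
    ComparableMeasures (μ.map f) (ν.map f) := by
  obtain ⟨C, hμ, hν⟩ := h
  refine ⟨C, ?_, ?_⟩ <;> rw [← Measure.map_smul] <;> apply Measure.map_mono <;> assumption

lemma prod_right (h : ComparableMeasures μ ν) (κ : Measure β) [SFinite μ] [SFinite ν] :
    ComparableMeasures (κ.prod μ) (κ.prod ν) := by
  obtain ⟨C, hμ, hν⟩ := h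
  refine ⟨C, ?_, ?_⟩ <;> rw [← Measure.prod_smul_right]
  · exact Measure.prod_mono le_rfl hμ
  · exact Measure.prod_mono le_rfl hν

lemma isFiniteMeasure (h : ComparableMeasures μ ν) [IsFiniteMeasure ν] : IsFiniteMeasure μ :=
  let ⟨_, hμ, _⟩ := h
  isFiniteMeasure_of_le _ hμ

lemma lintegral_le (h : ComparableMeasures μ ν) :
    ∀ᶠ C : ℝ≥0 in Filter.atTop, ∀ F : α → ℝ≥0∞,
      ↑C⁻¹ * ∫⁻ x, F x ∂ν ≤ ∫⁻ x, F x ∂μ ∧ ∫⁻ x, F x ∂μ ≤ C * ∫⁻ x, F x ∂ν := by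
  obtain ⟨D, hμ, hν⟩ := h
  filter_upwards [Filter.eventually_ge_atTop D, Filter.eventually_gt_atTop 0] with C hDC hC F
  have bound {μ ν : Measure α} (hle : μ ≤ D • ν) : ∫⁻ x, F x ∂μ ≤ C * ∫⁻ x, F x ∂ν := by
    rw [← smul_eq_mul, ← ENNReal.smul_def, ← lintegral_smul_measure]
    exact lintegral_mono' (hle.trans (by gcongr)) le_rfl
  refine ⟨?_, bound hμ⟩
  rw [ENNReal.coe_inv hC.ne', ENNReal.inv_mul_le_iff (by positivity) ENNReal.coe_ne_top]
  exact bound hν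

end ComparableMeasures

/-! ### Hausdorff measure of products -/

section HausdorffProd

lemma ediam_preimage_prodMk_le {X Y : Type*} [PseudoEMetricSpace X] [PseudoEMetricSpace Y]
    (U : Set (X × Y)) (y : Y) : ediam {x | (x, y) ∈ U} ≤ ediam U :=
  ediam_le fun x hx x' hx' =>
    (by simp [Prod.edist_eq] : edist x x' ≤ edist (x, y) (x', y)).trans
      (edist_le_ediam_of_mem hx hx')

lemma ediam_prod_le {X Y : Type*} [PseudoEMetricSpace X] [PseudoEMetricSpace Y]
    (s : Set X) (t : Set Y) : ediam (s ×ˢ t) ≤ max (ediam s) (ediam t) :=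
  ediam_le fun _ hp _ hq =>
    max_le_max (edist_le_ediam_of_mem hp.1 hq.1) (edist_le_ediam_of_mem hp.2 hq.2)

lemma prod_Icc_subset_iUnion {X : Type*} (A : Set X) (a b : ℝ) {ρ : ℝ} (hρ : 0 < ρ) :
    A ×ˢ Icc a b ⊆ ⋃ j ∈ Finset.range (⌊(b - a) / ρ⌋₊ + 1),
      A ×ˢ Icc (a + j * ρ) (a + (j + 1) * ρ) := by
  rintro ⟨x, t⟩ ⟨hx, hat, htb⟩
  have quot_nonneg : 0 ≤ (t - a) / ρ := div_nonneg (sub_nonneg.2 hat) hρ.le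
  have floor_le := Nat.floor_le quot_nonneg
  have lt_floor := Nat.lt_floor_add_one ((t - a) / ρ)
  rw [le_div_iff₀ hρ] at floor_le
  rw [div_lt_iff₀ hρ] at lt_floor
  have floor_mem : ⌊(t - a) / ρ⌋₊ ∈ Finset.range (⌊(b - a) / ρ⌋₊ + 1) :=
    Finset.mem_range_succ_iff.2 (by gcongr)
  exact mem_biUnion floor_mem ⟨hx, by constructor <;> dsimp only <;> linarith⟩

variable {X : Type*} [EMetricSpace X]

lemma measure_mul_le_tsum_ediam_rpow {Y : Type*} [EMetricSpace Y] [MeasurableSpace Y]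
    [BorelSpace Y] {ν : Measure Y} {d s : ℝ} (hd : 0 ≤ d) (hs : 0 ≤ s)
    (hν : ∀ V, ν V ≤ ediam V ^ d) {T : Set Y} (hT : MeasurableSet T) {U : ℕ → Set (X × Y)}
    {I : ℝ≥0∞} (hI : ∀ y ∈ T, I ≤ ∑' n, ⨆ _ : {x | (x, y) ∈ U n}.Nonempty,
      ediam {x | (x, y) ∈ U n} ^ s) :
    ν T * I ≤ ∑' n, ⨆ _ : (U n).Nonempty, ediam (U n) ^ (s + d) := by
  let V n := closure (Prod.snd '' U n)
  have hV n : MeasurableSet (V n) := isClosed_closure.measurableSet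
  have slice_le y (hy : y ∈ T) : I ≤ ∑' n, (V n).indicator (fun _ => ediam (U n) ^ s) y := by
    refine (hI y hy).trans (ENNReal.tsum_le_tsum fun n => iSup_le fun ⟨x, hx⟩ => ?_)
    rw [indicator_of_mem (subset_closure (mem_image_of_mem Prod.snd hx) : y ∈ V n)]
    exact ENNReal.rpow_le_rpow (ediam_preimage_prodMk_le (U n) y) hs
  have measure_V_le n : ν (V n) ≤ ediam (U n) ^ d := by
    refine (hν _).trans (ENNReal.rpow_le_rpow ?_ hd)
    rw [ediam_closure]
    simpa using (LipschitzWith.prod_snd (α := X) (β := Y)).ediam_image_le (U n)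
  calc ν T * I = ∫⁻ _ in T, I ∂ν := by rw [setLIntegral_const, mul_comm]
    _ ≤ ∫⁻ y in T, ∑' n, (V n).indicator (fun _ => ediam (U n) ^ s) y ∂ν :=
        setLIntegral_mono' hT slice_le
    _ ≤ ∫⁻ y, ∑' n, (V n).indicator (fun _ => ediam (U n) ^ s) y ∂ν :=
        setLIntegral_le_lintegral _ _
    _ = ∑' n, ediam (U n) ^ s * ν (V n) := by
        rw [lintegral_tsum fun n => (measurable_const.indicator (hV n)).aemeasurable]
        exact tsum_congr fun n => lintegral_indicator_const (hV n) _
    _ ≤ ∑' n, ⨆ _ : (U n).Nonempty, ediam (U n) ^ (s + d) := by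
        refine ENNReal.tsum_le_tsum fun n => ?_
        rcases (U n).eq_empty_or_nonempty with hU | hU
        · simp [V, hU]
        · simp only [hU, iSup_pos]
          rw [ENNReal.rpow_add_of_nonneg _ _ hs hd]
          gcongr
          exact measure_V_le n

lemma measure_mul_hausdorffMeasure_le [MeasurableSpace X] [BorelSpace X] {Y : Type*}
    [EMetricSpace Y] [MeasurableSpace Y] [BorelSpace Y] [SecondCountableTopologyEither X Y]
    {ν : Measure Y} {d s : ℝ} (hd : 0 ≤ d) (hs : 0 ≤ s)
    (hν : ∀ V, ν V ≤ ediam V ^ d) (A : Set X) {T : Set Y} (hT : MeasurableSet T) :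
    ν T * μH[s] A ≤ μH[s + d] (A ×ˢ T) := by
  simp only [Measure.hausdorffMeasure_apply, ENNReal.mul_iSup]
  refine iSup₂_mono fun r _ => le_iInf fun U => le_iInf₂ fun hcover hdiam =>
    measure_mul_le_tsum_ediam_rpow hd hs hν hT fun y hy => ?_
  have slices_cover : A ⊆ ⋃ n, {x | (x, y) ∈ U n} := fun x hx => by
    simpa using hcover (mk_mem_prod hx hy)
  exact iInf_le_of_le _ (iInf₂_le slices_cover fun n =>
    (ediam_preimage_prodMk_le (U n) y).trans (hdiam n))

section Interval

variable {m : OuterMeasure (X × ℝ)} {r : ℝ≥0∞} {s : ℝ}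

lemma outerMeasure_prod_Icc_le_of_ediam_le (hs : 0 ≤ s)
    (hm : ∀ U, ediam U ≤ r → m U ≤ ediam U ^ (s + 1)) {a b : ℝ} (hab : a ≤ b) {A : Set X}
    {ρ : ℝ} (hρ : 0 < ρ) (hρ1 : ρ ≤ 1) (hρr : ENNReal.ofReal ρ ≤ r)
    (hA : ediam A ≤ ENNReal.ofReal ρ) :
    m (A ×ˢ Icc a b) ≤ ENNReal.ofReal (b - a + 1) * ENNReal.ofReal ρ ^ s := by
  have piece_le (j : ℕ) :
      m (A ×ˢ Icc (a + j * ρ) (a + (j + 1) * ρ)) ≤ ENNReal.ofReal (ρ ^ (s + 1)) := by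
    have hdiam : ediam (A ×ˢ Icc (a + j * ρ) (a + (j + 1) * ρ)) ≤ ENNReal.ofReal ρ := by
      refine (ediam_prod_le _ _).trans (max_le hA ?_)
      rw [Real.ediam_Icc]
      ring_nf
      rfl
    rw [← ENNReal.ofReal_rpow_of_pos hρ]
    exact (hm _ (hdiam.trans hρr)).trans (by gcongr)
  calc m (A ×ˢ Icc a b)
      ≤ ∑ j ∈ Finset.range (⌊(b - a) / ρ⌋₊ + 1), m (A ×ˢ Icc (a + j * ρ) (a + (j + 1) * ρ)) :=
        (measure_mono (prod_Icc_subset_iUnion A a b hρ)).trans (measure_biUnion_finset_le _ _)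
    _ ≤ ENNReal.ofReal ((⌊(b - a) / ρ⌋₊ + 1) * ρ ^ (s + 1)) := by
        refine (Finset.sum_le_card_nsmul _ _ _ fun j _ => piece_le j).trans_eq ?_
        rw [Finset.card_range, nsmul_eq_mul, ENNReal.ofReal_mul (by positivity)]
        norm_cast
    _ ≤ ENNReal.ofReal ((b - a + 1) * ρ ^ s) := by
        refine ENNReal.ofReal_le_ofReal ?_
        have floor_le := Nat.floor_le (div_nonneg (sub_nonneg.2 hab) hρ.le)
        rw [le_div_iff₀ hρ] at floor_le
        rw [Real.rpow_add hρ, Real.rpow_one, mul_comm (ρ ^ s), ← mul_assoc]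
        gcongr
        linarith
    _ = ENNReal.ofReal (b - a + 1) * ENNReal.ofReal ρ ^ s := by
        rw [ENNReal.ofReal_mul (by linarith), ENNReal.ofReal_rpow_of_pos hρ]

lemma outerMeasure_prod_Icc_le_ediam_rpow (hs : 0 ≤ s)
    (hm : ∀ U, ediam U ≤ r → m U ≤ ediam U ^ (s + 1)) {a b : ℝ} (hab : a ≤ b) {A : Set X}
    (hA : ediam A < min r 1) :
    m (A ×ˢ Icc a b) ≤ ENNReal.ofReal (b - a + 1) * ediam A ^ s := by
  have : (nhdsWithin (ediam A) (Ioi (ediam A))).NeBot := nhdsGT_neBot_of_exists_gt ⟨_, hA⟩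
  have htendsto : Filter.Tendsto (fun ρ : ℝ≥0∞ => ENNReal.ofReal (b - a + 1) * ρ ^ s)
      (nhdsWithin (ediam A) (Ioi (ediam A)))
      (nhds (ENNReal.ofReal (b - a + 1) * ediam A ^ s)) :=
    ((ENNReal.continuous_const_mul ENNReal.ofReal_ne_top).comp
      ENNReal.continuous_rpow_const).tendsto _ |>.mono_left nhdsWithin_le_nhds
  refine ge_of_tendsto htendsto ?_
  filter_upwards [Ioo_mem_nhdsGT hA] with ρ ⟨hAρ, hρ⟩
  obtain ⟨hρr, hρ1⟩ := lt_min_iff.1 hρ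
  lift ρ to ℝ≥0 using hρ1.ne_top
  simpa using outerMeasure_prod_Icc_le_of_ediam_le (ρ := ρ) hs hm hab
    (by simpa using pos_of_gt hAρ) (by exact_mod_cast hρ1.le) (by simpa using hρr.le)
    (by simpa using hAρ.le)

variable [MeasurableSpace X] [BorelSpace X]

lemma outerMeasure_prod_Icc_le_hausdorffMeasure (hr : 0 < r) (hs : 0 ≤ s)
    (hm : ∀ U, ediam U ≤ r → m U ≤ ediam U ^ (s + 1)) {a b : ℝ} (hab : a ≤ b) (A : Set X) :
    m (A ×ˢ Icc a b) ≤ ENNReal.ofReal (b - a + 1) * μH[s] A := by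
  let κ : OuterMeasure X :=
    OuterMeasure.map Prod.fst (OuterMeasure.restrict (Prod.snd ⁻¹' Icc a b) m)
  have κ_apply (B : Set X) : κ B = m (B ×ˢ Icc a b) := by
    simp [κ, Set.prod_eq]
  have half_lt : min r 1 / 2 < min r 1 :=
    ENNReal.half_lt_self (by simp [hr.ne']) (by simp)
  have κ_le : κ ≤ ENNReal.ofReal (b - a + 1) • OuterMeasure.mkMetric fun x => x ^ s := by
    refine (OuterMeasure.le_mkMetric (fun x => ENNReal.ofReal (b - a + 1) * x ^ s) κ
      (min r 1 / 2) (by simp [hr.ne']) fun B hB => ?_).trans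
      (OuterMeasure.mkMetric_mono_smul ENNReal.ofReal_ne_top
        (ENNReal.ofReal_pos.2 (by linarith)).ne' (Filter.Eventually.of_forall fun _ => le_rfl))
    rw [κ_apply]
    exact outerMeasure_prod_Icc_le_ediam_rpow hs hm hab (hB.trans_lt half_lt)
  rw [← κ_apply, Measure.hausdorffMeasure, ← OuterMeasure.coe_mkMetric]
  exact κ_le A

lemma hausdorffMeasure_prod_Icc_le (hs : 0 ≤ s) {a b : ℝ} (hab : a ≤ b) (A : Set X) :
    μH[s + 1] (A ×ˢ Icc a b) ≤ ENNReal.ofReal (b - a + 1) * μH[s] A := by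
  rw [Measure.hausdorffMeasure, ← OuterMeasure.coe_mkMetric, OuterMeasure.mkMetric,
    OuterMeasure.mkMetric']
  simp only [OuterMeasure.iSup_apply]
  refine iSup₂_le fun r hr => ?_
  have pre_le (U : Set (X × ℝ)) (hU : ediam U ≤ r) :
      OuterMeasure.mkMetric'.pre (fun U => ediam U ^ (s + 1)) r U ≤ ediam U ^ (s + 1) :=
    OuterMeasure.mkMetric'.pre_le hU
  exact outerMeasure_prod_Icc_le_hausdorffMeasure hr hs pre_le hab A

end Interval

end HausdorffProd

/-! ### Level sets of homogeneous gauges -/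

section LocallyLipschitzOn

variable {α β γ : Type*} [PseudoEMetricSpace α] [PseudoEMetricSpace β] [PseudoEMetricSpace γ]
  {s : Set α} {t : Set β} {f : α → β}

lemma locallyLipschitzOn_comp {g : β → γ} (hg : LocallyLipschitzOn t g)
    (hf : LocallyLipschitzOn s f) (hst : MapsTo f s t) : LocallyLipschitzOn s (g ∘ f) := by
  intro x hx
  obtain ⟨Kf, u, hu, hfu⟩ := hf hx
  obtain ⟨Kg, v, hv, hgv⟩ := hg (hst hx)
  refine ⟨Kg * Kf, u ∩ f ⁻¹' v, Filter.inter_mem hu ?_,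
    hgv.comp (hfu.mono inter_subset_left) fun y hy => hy.2⟩
  exact (hf.continuousOn x hx).tendsto_nhdsWithin hst hv

lemma locallyLipschitzOn_prodMk {g : α → γ} (hf : LocallyLipschitzOn s f)
    (hg : LocallyLipschitzOn s g) : LocallyLipschitzOn s fun x => (f x, g x) := by
  intro x hx
  obtain ⟨Kf, u, hu, hfu⟩ := hf hx
  obtain ⟨Kg, v, hv, hgv⟩ := hg hx
  exact ⟨max Kf Kg, u ∩ v, Filter.inter_mem hu hv,
    (hfu.mono inter_subset_left).prodMk (hgv.mono inter_subset_right)⟩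

end LocallyLipschitzOn

/-- `N` is homogeneous of degree one under the dilations `(δ t)` for `t > 0`, with the regularity
needed to compare its level sets with Lebesgue measure. Nothing is required of `δ t` for `t ≤ 0`
beyond measurability. -/
structure IsHomogeneousGauge {E : Type*} [PseudoMetricSpace E] [MeasurableSpace E]
    (δ : ℝ → E → E) (N : E → ℝ) : Prop where
  one_dilate : ∀ p, δ 1 p = p
  dilate_dilate : ∀ {s t : ℝ}, 0 < s → 0 < t → ∀ p, δ s (δ t p) = δ (s * t) p
  apply_dilate : ∀ {t : ℝ}, 0 < t → ∀ p, N (δ t p) = t * N p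
  locallyLipschitz : LocallyLipschitz N
  locallyLipschitzOn_dilate : LocallyLipschitzOn (univ ×ˢ Ioi 0) fun q : E × ℝ => δ q.2 q.1
  measurable_dilate : Measurable fun q : E × ℝ => δ q.2 q.1
  isBounded_shell : Bornology.IsBounded (N ⁻¹' Icc 1 2)

/-- The projection onto the level set `N = 1` along the orbits of the dilations. -/
def radialProjection {E : Type*} (δ : ℝ → E → E) (N : E → ℝ) (p : E) : E := δ (N p)⁻¹ p

/-- The cone measure on the level set `N = 1`: the mass of a set is the `μ`-measure of the part of
the cone over it (with respect to the dilations `δ`) that lies in the shell `1 ≤ N ≤ 2`. -/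
def coneMeasure {E : Type*} [MeasurableSpace E] (μ : Measure E) (δ : ℝ → E → E) (N : E → ℝ) :
    Measure E :=
  (μ.restrict (N ⁻¹' Icc 1 2)).map (radialProjection δ N)

namespace IsHomogeneousGauge

section Metric

variable {E : Type*} [PseudoMetricSpace E] [MeasurableSpace E] {δ : ℝ → E → E} {N : E → ℝ}

lemma dilate_radialProjection (h : IsHomogeneousGauge δ N) {p : E} (hp : 0 < N p) :
    δ (N p) (radialProjection δ N p) = p := by
  rw [radialProjection, h.dilate_dilate hp (inv_pos.2 hp), mul_inv_cancel₀ hp.ne', h.one_dilate]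

lemma apply_radialProjection (h : IsHomogeneousGauge δ N) {p : E} (hp : 0 < N p) :
    N (radialProjection δ N p) = 1 := by
  rw [radialProjection, h.apply_dilate (inv_pos.2 hp), inv_mul_cancel₀ hp.ne']

lemma radialProjection_dilate (h : IsHomogeneousGauge δ N) {t : ℝ} (ht : 0 < t) {x : E}
    (hx : N x = 1) : radialProjection δ N (δ t x) = x := by
  rw [radialProjection, h.apply_dilate ht, hx, mul_one, h.dilate_dilate (inv_pos.2 ht) ht,
    inv_mul_cancel₀ ht.ne', h.one_dilate]

lemma radialProjection_preimage_inter_shell (h : IsHomogeneousGauge δ N) (s : Set E) :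
    radialProjection δ N ⁻¹' s ∩ N ⁻¹' Icc 1 2 =
      (fun q : E × ℝ => δ q.2 q.1) '' ((s ∩ N ⁻¹' {1}) ×ˢ Icc 1 2) := by
  ext p
  constructor
  · rintro ⟨hps, hp⟩
    have hp0 : 0 < N p := zero_lt_one.trans_le hp.1
    exact ⟨(radialProjection δ N p, N p), ⟨⟨hps, h.apply_radialProjection hp0⟩, hp⟩,
      h.dilate_radialProjection hp0⟩
  · rintro ⟨⟨x, t⟩, ⟨⟨hxs, hx⟩, ht⟩, rfl⟩
    have ht0 : 0 < t := zero_lt_one.trans_le ht.1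
    refine ⟨?_, ?_⟩
    · rwa [mem_preimage, h.radialProjection_dilate ht0 hx]
    · rwa [mem_preimage, h.apply_dilate ht0, hx, mul_one]

lemma prod_subset_image_shell (h : IsHomogeneousGauge δ N) (s : Set E) :
    (s ∩ N ⁻¹' {1}) ×ˢ Icc 1 2 ⊆
      (fun p => (radialProjection δ N p, N p)) '' (radialProjection δ N ⁻¹' s ∩ N ⁻¹' Icc 1 2) := by
  rintro ⟨x, t⟩ hxt
  have ht0 : 0 < t := zero_lt_one.trans_le hxt.2.1
  have hx : N x = 1 := hxt.1.2
  refine ⟨δ t x, ?_, ?_⟩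
  · rw [h.radialProjection_preimage_inter_shell]
    exact ⟨(x, t), hxt, rfl⟩
  · simp only [h.radialProjection_dilate ht0 hx, h.apply_dilate ht0, hx, mul_one]

lemma isCompact_shell [ProperSpace E] (h : IsHomogeneousGauge δ N) : IsCompact (N ⁻¹' Icc 1 2) :=
  isCompact_of_isClosed_isBounded (isClosed_Icc.preimage h.locallyLipschitz.continuous)
    h.isBounded_shell

lemma isCompact_levelSet [ProperSpace E] (h : IsHomogeneousGauge δ N) : IsCompact (N ⁻¹' {1}) :=
  h.isCompact_shell.of_isClosed_subset (isClosed_singleton.preimage h.locallyLipschitz.continuous)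
    (preimage_mono (by simp))

lemma exists_lipschitzOnWith_dilate [ProperSpace E] (h : IsHomogeneousGauge δ N) :
    ∃ K, LipschitzOnWith K (fun q : E × ℝ => δ q.2 q.1) ((N ⁻¹' {1}) ×ˢ Icc 1 2) := by
  refine LocallyLipschitzOn.exists_lipschitzOnWith_of_compact
    (h.isCompact_levelSet.prod isCompact_Icc) (h.locallyLipschitzOn_dilate.mono ?_)
  exact prod_mono (subset_univ _) fun t ht => zero_lt_one.trans_le ht.1

lemma locallyLipschitzOn_radialProjection (h : IsHomogeneousGauge δ N) :
    LocallyLipschitzOn (N ⁻¹' Ioi 0) (radialProjection δ N) := by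
  have inv_lipschitz : LocallyLipschitzOn (Ioi (0 : ℝ)) fun t => t⁻¹ :=
    ((contDiffOn_inv ℝ).mono fun t (ht : 0 < t) => ht.ne').locallyLipschitzOn (convex_Ioi 0)
  have inv_gauge : LocallyLipschitzOn (N ⁻¹' Ioi 0) fun p => (N p)⁻¹ :=
    locallyLipschitzOn_comp inv_lipschitz h.locallyLipschitz.locallyLipschitzOn fun _ hp => hp
  exact locallyLipschitzOn_comp h.locallyLipschitzOn_dilate
    (locallyLipschitzOn_prodMk LocallyLipschitz.id.locallyLipschitzOn inv_gauge)
    fun p hp => ⟨mem_univ p, (inv_pos.2 hp : 0 < (N p)⁻¹)⟩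

lemma exists_lipschitzOnWith_radialProjection [ProperSpace E] (h : IsHomogeneousGauge δ N) :
    ∃ K, LipschitzOnWith K (fun p => (radialProjection δ N p, N p)) (N ⁻¹' Icc 1 2) :=
  LocallyLipschitzOn.exists_lipschitzOnWith_of_compact h.isCompact_shell <|
    locallyLipschitzOn_prodMk
      (h.locallyLipschitzOn_radialProjection.mono fun _ hp => zero_lt_one.trans_le hp.1)
      h.locallyLipschitz.locallyLipschitzOn

variable [BorelSpace E]

lemma measurable (h : IsHomogeneousGauge δ N) : Measurable N :=
  h.locallyLipschitz.continuous.measurable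

lemma measurable_radialProjection (h : IsHomogeneousGauge δ N) :
    Measurable (radialProjection δ N) :=
  h.measurable_dilate.comp (measurable_id.prodMk h.measurable.inv)

lemma coneMeasure_apply (h : IsHomogeneousGauge δ N) (μ : Measure E) {s : Set E}
    (hs : MeasurableSet s) :
    coneMeasure μ δ N s = μ (radialProjection δ N ⁻¹' s ∩ N ⁻¹' Icc 1 2) := by
  rw [coneMeasure, Measure.map_apply h.measurable_radialProjection hs,
    Measure.restrict_apply (h.measurable_radialProjection hs)]

end Metric

section Haar

variable {E : Type*} [NormedAddCommGroup E] [NormedSpace ℝ E] [FiniteDimensional ℝ E]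
  [MeasurableSpace E] [BorelSpace E] {δ : ℝ → E → E} {N : E → ℝ} (μ : Measure E)
  [μ.IsAddHaarMeasure]

lemma isFiniteMeasure_coneMeasure (h : IsHomogeneousGauge δ N) :
    IsFiniteMeasure (coneMeasure μ δ N) := by
  refine ⟨?_⟩
  rw [h.coneMeasure_apply μ .univ]
  exact (measure_mono inter_subset_right).trans_lt h.isCompact_shell.measure_lt_top

lemma coneMeasure_le_hausdorffMeasure [Nontrivial E] (h : IsHomogeneousGauge δ N) :
    ∃ C : ℝ≥0, coneMeasure μ δ N ≤ C • μH[Module.finrank ℝ E - 1].restrict (N ⁻¹' {1}) := by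
  set d : ℝ := Module.finrank ℝ E - 1 with hd
  have hd0 : 0 ≤ d := sub_nonneg.2 (by exact_mod_cast Module.finrank_pos (R := ℝ) (M := E))
  have hμ := Measure.isAddLeftInvariant_eq_smul μ μH[Module.finrank ℝ E]
  set c := μ.addHaarScalarFactor μH[Module.finrank ℝ E]
  obtain ⟨K, hK⟩ := h.exists_lipschitzOnWith_dilate
  refine ⟨c * (K ^ (d + 1) * 2), Measure.le_iff.2 fun s hs => ?_⟩
  rw [h.coneMeasure_apply μ hs, h.radialProjection_preimage_inter_shell, Measure.smul_apply,
    Measure.restrict_apply hs, hμ, Measure.smul_apply, mul_smul]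
  gcongr
  calc μH[Module.finrank ℝ E] ((fun q : E × ℝ => δ q.2 q.1) '' ((s ∩ N ⁻¹' {1}) ×ˢ Icc 1 2))
      ≤ K ^ (d + 1) * μH[d + 1] ((s ∩ N ⁻¹' {1}) ×ˢ Icc (1 : ℝ) 2) := by
        rw [show (Module.finrank ℝ E : ℝ) = d + 1 by simp [hd]]
        exact (hK.mono (prod_mono inter_subset_right subset_rfl)).hausdorffMeasure_image_le
          (by positivity)
    _ ≤ K ^ (d + 1) * (ENNReal.ofReal (2 - 1 + 1) * μH[d] (s ∩ N ⁻¹' {1})) := by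
        gcongr
        exact hausdorffMeasure_prod_Icc_le hd0 one_le_two _
    _ = (K ^ (d + 1) * 2 : ℝ≥0) • μH[d] (s ∩ N ⁻¹' {1}) := by
        norm_num [ENNReal.smul_def, mul_assoc,
          ENNReal.coe_rpow_of_nonneg _ (add_nonneg hd0 zero_le_one)]

lemma hausdorffMeasure_le_coneMeasure [Nontrivial E] (h : IsHomogeneousGauge δ N) :
    ∃ C : ℝ≥0, μH[Module.finrank ℝ E - 1].restrict (N ⁻¹' {1}) ≤ C • coneMeasure μ δ N := by
  set d : ℝ := Module.finrank ℝ E - 1 with hd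
  have hd0 : 0 ≤ d := sub_nonneg.2 (by exact_mod_cast Module.finrank_pos (R := ℝ) (M := E))
  have hμ := Measure.isAddLeftInvariant_eq_smul μH[Module.finrank ℝ E] μ
  set c := (μH[Module.finrank ℝ E]).addHaarScalarFactor μ
  obtain ⟨K, hK⟩ := h.exists_lipschitzOnWith_radialProjection
  refine ⟨K ^ (d + 1) * c, Measure.le_iff.2 fun s hs => ?_⟩
  set B := radialProjection δ N ⁻¹' s ∩ N ⁻¹' Icc 1 2
  calc μH[d].restrict (N ⁻¹' {1}) s
      = volume (Icc (1 : ℝ) 2) * μH[d] (s ∩ N ⁻¹' {1}) := by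
        rw [Measure.restrict_apply hs, Real.volume_Icc]
        norm_num
    _ ≤ μH[d + 1] ((s ∩ N ⁻¹' {1}) ×ˢ Icc (1 : ℝ) 2) :=
        measure_mul_hausdorffMeasure_le zero_le_one hd0
          (fun V => by simpa using Real.volume_le_diam V) _ measurableSet_Icc
    _ ≤ μH[d + 1] ((fun p => (radialProjection δ N p, N p)) '' B) :=
        measure_mono (h.prod_subset_image_shell s)
    _ ≤ K ^ (d + 1) * μH[d + 1] B :=
        (hK.mono inter_subset_right).hausdorffMeasure_image_le (by positivity)
    _ = ((K ^ (d + 1) * c) • coneMeasure μ δ N) s := by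
        rw [show d + 1 = Module.finrank ℝ E by simp [hd], hμ, Measure.smul_apply,
          Measure.smul_apply, h.coneMeasure_apply μ hs, mul_smul]
        simp [ENNReal.smul_def, B]

lemma comparableMeasures_coneMeasure [Nontrivial E] (h : IsHomogeneousGauge δ N) :
    ComparableMeasures (μH[Module.finrank ℝ E - 1].restrict (N ⁻¹' {1})) (coneMeasure μ δ N) :=
  let ⟨_, hle⟩ := h.hausdorffMeasure_le_coneMeasure μ
  let ⟨_, hge⟩ := h.coneMeasure_le_hausdorffMeasure μ
  .of_le_smul hle hge

end Haar

end IsHomogeneousGauge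

/-! ### Polar decompositions -/

/-- `μ` is disintegrated along the orbits of the dilations `δ`, with homogeneous dimension `Q` and
angular part `σ`. -/
def HasPolarDecomposition {E : Type*} [MeasurableSpace E] (μ : Measure E) (δ : ℝ → E → E) (Q : ℝ)
    (σ : Measure E) : Prop :=
  ∀ H : E → ℝ≥0∞, Measurable H →
    ∫⁻ p, H p ∂μ = ∫⁻ t in Ioi (0 : ℝ), ENNReal.ofReal (t ^ (Q - 1)) * ∫⁻ x, H (δ t x) ∂σ

lemma HasPolarDecomposition.ne_zero {E : Type*} [MeasurableSpace E] {μ σ : Measure E} [NeZero μ]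
    {δ : ℝ → E → E} {Q : ℝ} (h : HasPolarDecomposition μ δ Q σ) : σ ≠ 0 := by
  rintro rfl
  have := h 1 measurable_const
  simp [NeZero.ne μ] at this

section RadialMass

variable (k : ℝ)

lemma continuousOn_rpow_Icc_one_two : ContinuousOn (fun t : ℝ => t ^ k) (Icc 1 2) :=
  continuousOn_id.rpow_const fun _ ht => .inl (zero_lt_one.trans_le ht.1).ne'

lemma lintegral_rpow_Icc_one_two_ne_top :
    ∫⁻ t in Icc (1 : ℝ) 2, ENNReal.ofReal (t ^ k) ≠ ∞ :=
  ((continuousOn_rpow_Icc_one_two k).integrableOn_compact isCompact_Icc).lintegral_lt_top.ne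

lemma lintegral_rpow_Icc_one_two_ne_zero :
    ∫⁻ t in Icc (1 : ℝ) 2, ENNReal.ofReal (t ^ k) ≠ 0 := by
  rw [← pos_iff_ne_zero, setLIntegral_pos_iff (by fun_prop)]
  have hsub : Icc (1 : ℝ) 2 ⊆ Function.support fun t => ENNReal.ofReal (t ^ k) := fun t ht =>
    (ENNReal.ofReal_pos.2 (Real.rpow_pos_of_pos (zero_lt_one.trans_le ht.1) k)).ne'
  rw [inter_eq_self_of_subset_right hsub, Real.volume_Icc]
  norm_num

end RadialMass

/-- The Hausdorff measure of codimension one on the level set `N = 1`, normalized to total mass one.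
It is the zero measure if that level set has infinite mass. -/
def levelSetMeasure {E : Type*} [NormedAddCommGroup E] [NormedSpace ℝ E] [MeasurableSpace E]
    [BorelSpace E] (N : E → ℝ) : Measure E :=
  (μH[Module.finrank ℝ E - 1] (N ⁻¹' {1}))⁻¹ • μH[Module.finrank ℝ E - 1].restrict (N ⁻¹' {1})

namespace IsHomogeneousGauge

lemma coneMeasure_eq_smul {E : Type*} [PseudoMetricSpace E] [MeasurableSpace E] [BorelSpace E]
    {δ : ℝ → E → E} {N : E → ℝ} {μ σ : Measure E} {Q : ℝ} (h : IsHomogeneousGauge δ N)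
    (hpolar : HasPolarDecomposition μ δ Q σ) (hσ : ∀ᵐ x ∂σ, N x = 1) :
    coneMeasure μ δ N = (∫⁻ t in Icc (1 : ℝ) 2, ENNReal.ofReal (t ^ (Q - 1))) • σ := by
  ext s hs
  set B := radialProjection δ N ⁻¹' s ∩ N ⁻¹' Icc 1 2
  have hB : MeasurableSet B :=
    (h.measurable_radialProjection hs).inter (h.measurable measurableSet_Icc)
  have angular_integral {t : ℝ} (ht : 0 < t) :
      ∫⁻ x, B.indicator 1 (δ t x) ∂σ = (Icc (1 : ℝ) 2).indicator (fun _ => σ s) t := by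
    have indicator_eq : ∀ᵐ x ∂σ, B.indicator (1 : E → ℝ≥0∞) (δ t x) =
        s.indicator (fun _ => (Icc (1 : ℝ) 2).indicator 1 t) x := by
      filter_upwards [hσ] with x hx
      have hmem : δ t x ∈ B ↔ x ∈ s ∧ t ∈ Icc (1 : ℝ) 2 := by
        rw [mem_inter_iff, mem_preimage, mem_preimage, h.radialProjection_dilate ht hx,
          h.apply_dilate ht, hx, mul_one]
      by_cases hxs : x ∈ s <;> by_cases ht12 : t ∈ Icc (1 : ℝ) 2 <;>
        simp only [indicator, hmem, hxs, ht12, and_true, and_false, if_true, if_false,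
          Pi.one_apply]
    rw [lintegral_congr_ae indicator_eq, lintegral_indicator_const hs]
    by_cases ht12 : t ∈ Icc (1 : ℝ) 2 <;> simp [ht12]
  calc coneMeasure μ δ N s = ∫⁻ p, B.indicator 1 p ∂μ := by
        rw [h.coneMeasure_apply μ hs, lintegral_indicator_one hB]
    _ = ∫⁻ t in Ioi (0 : ℝ), ENNReal.ofReal (t ^ (Q - 1)) * ∫⁻ x, B.indicator 1 (δ t x) ∂σ :=
        hpolar _ (measurable_one.indicator hB)
    _ = ∫⁻ t in Ioi (0 : ℝ),
          (Icc (1 : ℝ) 2).indicator (fun t => ENNReal.ofReal (t ^ (Q - 1)) * σ s) t := by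
        refine setLIntegral_congr_fun measurableSet_Ioi fun t ht => ?_
        simp only [angular_integral ht, indicator_apply, mul_ite, mul_zero]
    _ = ((∫⁻ t in Icc (1 : ℝ) 2, ENNReal.ofReal (t ^ (Q - 1))) • σ) s := by
        rw [setLIntegral_indicator measurableSet_Icc, inter_eq_self_of_subset_left
          (Icc_subset_Ioi_iff one_le_two |>.2 one_pos), lintegral_mul_const _ (by fun_prop)]
        rfl

section Haar

variable {E : Type*} [NormedAddCommGroup E] [NormedSpace ℝ E] [FiniteDimensional ℝ E]
  [Nontrivial E] [MeasurableSpace E] [BorelSpace E] {δ : ℝ → E → E} {N : E → ℝ} {μ σ : Measure E}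
  [μ.IsAddHaarMeasure] {Q : ℝ}

lemma comparableMeasures_hausdorffMeasure (h : IsHomogeneousGauge δ N)
    (hpolar : HasPolarDecomposition μ δ Q σ) (hσ : ∀ᵐ x ∂σ, N x = 1) :
    ComparableMeasures (μH[Module.finrank ℝ E - 1].restrict (N ⁻¹' {1})) σ := by
  refine (h.comparableMeasures_coneMeasure μ).trans ?_
  rw [h.coneMeasure_eq_smul hpolar hσ]
  exact .smul_self (lintegral_rpow_Icc_one_two_ne_zero _) (lintegral_rpow_Icc_one_two_ne_top _) σ

lemma comparableMeasures_levelSetMeasure (h : IsHomogeneousGauge δ N)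
    (hpolar : HasPolarDecomposition μ δ Q σ) (hσ : ∀ᵐ x ∂σ, N x = 1) :
    ComparableMeasures (levelSetMeasure N) σ := by
  have hcomp := h.comparableMeasures_hausdorffMeasure hpolar hσ
  have mass_ne_top : μH[Module.finrank ℝ E - 1] (N ⁻¹' {1}) ≠ ∞ := by
    have := h.isFiniteMeasure_coneMeasure μ
    have := (h.comparableMeasures_coneMeasure μ).isFiniteMeasure
    simpa using measure_ne_top (μH[Module.finrank ℝ E - 1].restrict (N ⁻¹' {1})) univ
  have mass_ne_zero : μH[Module.finrank ℝ E - 1] (N ⁻¹' {1}) ≠ 0 := by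
    intro hzero
    obtain ⟨C, -, hle⟩ := hcomp
    rw [Measure.restrict_eq_zero.2 hzero, smul_zero] at hle
    exact hpolar.ne_zero (Measure.nonpos_iff_eq_zero'.1 hle)
  exact (ComparableMeasures.smul_self (ENNReal.inv_ne_zero.2 mass_ne_top)
    (ENNReal.inv_ne_top.2 mass_ne_zero) _).trans hcomp

end Haar

end IsHomogeneousGauge

section Sphere

variable {E : Type*} [NormedAddCommGroup E] [NormedSpace ℝ E] [MeasurableSpace E] [BorelSpace E]

lemma isHomogeneousGauge_norm : IsHomogeneousGauge (fun t (x : E) => t • x) norm where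
  one_dilate := one_smul ℝ
  dilate_dilate _ _ := smul_smul _ _
  apply_dilate ht x := norm_smul_of_nonneg ht.le x
  locallyLipschitz := lipschitzWith_one_norm.locallyLipschitz
  locallyLipschitzOn_dilate :=
    (contDiff_snd.smul (𝕜 := ℝ) contDiff_fst).locallyLipschitz.locallyLipschitzOn
  measurable_dilate := by fun_prop
  isBounded_shell := (isBounded_closedBall (x := 0) (r := 2)).subset fun x hx => by
    simpa using hx.2

variable (μ : Measure E)

variable (E) in
/-- The surface measure on the unit sphere, as a Hausdorff measure on the ambient space. -/
def unitSphereMeasure : Measure E := μH[Module.finrank ℝ E - 1].restrict (sphere 0 1)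

/-- The polar measure of `μ` on the unit sphere, as a measure on the ambient space. -/
def polarSphereMeasure : Measure E := μ.toSphere.map Subtype.val

lemma ae_norm_eq_one_polarSphereMeasure : ∀ᵐ x ∂polarSphereMeasure μ, ‖x‖ = 1 := by
  rw [polarSphereMeasure, ae_map_iff measurable_subtype_coe.aemeasurable
    (measurableSet_eq_fun measurable_norm measurable_const)]
  exact .of_forall norm_eq_of_mem_sphere

variable [FiniteDimensional ℝ E] [μ.IsAddHaarMeasure]

instance : IsFiniteMeasure (polarSphereMeasure μ) := by
  unfold polarSphereMeasure
  infer_instance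

lemma hasPolarDecomposition_smul [Nontrivial E] :
    HasPolarDecomposition μ (fun t x => t • x) (Module.finrank ℝ E) (polarSphereMeasure μ) := by
  intro H hH
  let k := Module.finrank ℝ E - 1
  have cast_k : (k : ℝ) = Module.finrank ℝ E - 1 := by
    simp [k, Nat.cast_sub (Module.finrank_pos (R := ℝ) (M := E))]
  have hmap := μ.measurePreserving_homeomorphUnitSphereProd
  calc ∫⁻ z, H z ∂μ = ∫⁻ z : ({0}ᶜ : Set E), H z ∂(μ.comap Subtype.val) := by
        rw [lintegral_subtype_comap (measurableSet_singleton _).compl, restrict_compl_singleton]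
    _ = ∫⁻ q, H (q.2.1 • (q.1 : E)) ∂(μ.toSphere.prod (.volumeIoiPow k)) := by
        rw [← hmap.lintegral_comp (by fun_prop)]
        refine lintegral_congr fun z => ?_
        have hz : ‖(z : E)‖ ≠ 0 := norm_ne_zero_iff.2 z.2
        simp [homeomorphUnitSphereProd, smul_smul, hz]
    _ = ∫⁻ t : Ioi (0 : ℝ), ∫⁻ θ, H (t.1 • (θ : E)) ∂μ.toSphere ∂(.volumeIoiPow k) :=
        lintegral_prod_symm' _ (by fun_prop)
    _ = _ := by
        rw [Measure.volumeIoiPow, lintegral_withDensity_eq_lintegral_mul _ (by fun_prop)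
          (by fun_prop), ← lintegral_subtype_comap measurableSet_Ioi]
        refine lintegral_congr fun t => ?_
        rw [← cast_k, Real.rpow_natCast, polarSphereMeasure,
          lintegral_map (by fun_prop) measurable_subtype_coe]
        rfl

lemma comparableMeasures_unitSphereMeasure [Nontrivial E] :
    ComparableMeasures (unitSphereMeasure E) (polarSphereMeasure μ) := by
  have hsphere : sphere (0 : E) 1 = norm ⁻¹' {1} := by
    ext
    simp
  rw [unitSphereMeasure, hsphere]
  exact isHomogeneousGauge_norm.comparableMeasures_hausdorffMeasure
    (hasPolarDecomposition_smul μ) (ae_norm_eq_one_polarSphereMeasure μ)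

instance [Nontrivial E] : IsFiniteMeasure (unitSphereMeasure E) :=
  (comparableMeasures_unitSphereMeasure Measure.addHaar).isFiniteMeasure

end Sphere

/-! ### The anisotropic gauge on a product -/

section PowGauge

/-- The gauge `|y|^{a₁} + |z|^{a₂}`, whose unit level set is the surface `S₂^𝐚`. -/
def powGauge {E₁ E₂ : Type*} [Norm E₁] [Norm E₂] (a₁ a₂ : ℝ) (p : E₁ × E₂) : ℝ :=
  ‖p.1‖ ^ a₁ + ‖p.2‖ ^ a₂

/-- The anisotropic dilations under which `powGauge a₁ a₂` is homogeneous of degree one. -/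
def powDilation {E₁ E₂ : Type*} [SMul ℝ E₁] [SMul ℝ E₂] (a₁ a₂ t : ℝ) (p : E₁ × E₂) : E₁ × E₂ :=
  (t ^ (1 / a₁) • p.1, t ^ (1 / a₂) • p.2)

lemma norm_rpow_smul_rpow {E : Type*} [SeminormedAddCommGroup E] [NormedSpace ℝ E] {a t : ℝ}
    (ha : a ≠ 0) (ht : 0 ≤ t) (x : E) : ‖t ^ (1 / a) • x‖ ^ a = t * ‖x‖ ^ a := by
  rw [norm_smul_of_nonneg (by positivity), Real.mul_rpow (by positivity) (norm_nonneg x),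
    ← Real.rpow_mul ht, one_div_mul_cancel ha, Real.rpow_one]

lemma locallyLipschitz_norm_rpow {E : Type*} [SeminormedAddCommGroup E] {a : ℝ} (ha : 1 ≤ a) :
    LocallyLipschitz fun x : E => ‖x‖ ^ a :=
  (Real.contDiff_rpow_const_of_le (n := 1) (by simpa using ha)).locallyLipschitz.comp
    lipschitzWith_one_norm.locallyLipschitz

lemma locallyLipschitzOn_rpow_smul {X E : Type*} [PseudoEMetricSpace X] [NormedAddCommGroup E]
    [NormedSpace ℝ E] (k : ℝ) {π : X → E} (hπ : LocallyLipschitz π) :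
    LocallyLipschitzOn (univ ×ˢ Ioi 0) fun q : X × ℝ => q.2 ^ k • π q.1 := by
  have rpow_lipschitz : LocallyLipschitzOn (Ioi (0 : ℝ)) fun t => t ^ k :=
    ContDiffOn.locallyLipschitzOn (convex_Ioi 0) fun t (ht : 0 < t) =>
      (Real.contDiffAt_rpow_const_of_ne ht.ne').contDiffWithinAt
  have smul_lipschitz : LocallyLipschitz fun q : ℝ × E => q.1 • q.2 :=
    (contDiff_fst.smul (𝕜 := ℝ) contDiff_snd).locallyLipschitz
  exact locallyLipschitzOn_comp (smul_lipschitz.locallyLipschitzOn (s := univ))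
    (locallyLipschitzOn_prodMk
      (locallyLipschitzOn_comp rpow_lipschitz
        LipschitzWith.prod_snd.locallyLipschitz.locallyLipschitzOn fun _ hq => hq.2)
      (hπ.comp LipschitzWith.prod_fst.locallyLipschitz).locallyLipschitzOn) (mapsTo_univ _ _)

lemma le_two_of_rpow_le_two {x a : ℝ} (ha : 1 ≤ a) (h : x ^ a ≤ 2) : x ≤ 2 := by
  by_contra! hx
  linarith [Real.self_le_rpow_of_one_le (by linarith) ha]

variable {E₁ E₂ : Type*} [NormedAddCommGroup E₁] [NormedSpace ℝ E₁]
  [MeasurableSpace E₁] [BorelSpace E₁] [NormedAddCommGroup E₂] [NormedSpace ℝ E₂]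
  [MeasurableSpace E₂] [BorelSpace E₂] {a₁ a₂ : ℝ}

lemma isHomogeneousGauge_powGauge (ha₁ : 1 ≤ a₁) (ha₂ : 1 ≤ a₂) :
    IsHomogeneousGauge (powDilation a₁ a₂) (powGauge a₁ a₂ : E₁ × E₂ → ℝ) where
  one_dilate p := by simp [powDilation]
  dilate_dilate hs ht p := by
    simp only [powDilation, smul_smul, Real.mul_rpow hs.le ht.le]
  apply_dilate ht p := by
    simp only [powGauge, powDilation, mul_add,
      norm_rpow_smul_rpow (zero_lt_one.trans_le ha₁).ne' ht.le,
      norm_rpow_smul_rpow (zero_lt_one.trans_le ha₂).ne' ht.le]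
  locallyLipschitz :=
    ((locallyLipschitz_norm_rpow ha₁).comp LipschitzWith.prod_fst.locallyLipschitz).add
      ((locallyLipschitz_norm_rpow ha₂).comp LipschitzWith.prod_snd.locallyLipschitz)
  locallyLipschitzOn_dilate := locallyLipschitzOn_prodMk
    (locallyLipschitzOn_rpow_smul _ LipschitzWith.prod_fst.locallyLipschitz)
    (locallyLipschitzOn_rpow_smul _ LipschitzWith.prod_snd.locallyLipschitz)
  measurable_dilate := by
    unfold powDilation
    fun_prop
  isBounded_shell := (isBounded_closedBall (x := 0) (r := 2)).subset fun p hp => by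
    have hp2 : ‖p.1‖ ^ a₁ + ‖p.2‖ ^ a₂ ≤ 2 := hp.2
    have h₁ : 0 ≤ ‖p.1‖ ^ a₁ := by positivity
    have h₂ : 0 ≤ ‖p.2‖ ^ a₂ := by positivity
    rw [mem_closedBall_zero_iff, Prod.norm_def]
    exact max_le (le_two_of_rpow_le_two ha₁ (by linarith)) (le_two_of_rpow_le_two ha₂ (by linarith))

end PowGauge

/-! ### Slicing the anisotropic gauge -/

section ChangeOfVariables

lemma image_sub_rpow_Ioi {k : ℝ} (hk : 0 < k) (r : ℝ) :
    (fun t : ℝ => (t - r) ^ k) '' Ioi r = Ioi 0 := by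
  ext s
  constructor
  · rintro ⟨t, ht, rfl⟩
    exact Real.rpow_pos_of_pos (sub_pos.2 ht) _
  · intro (hs : 0 < s)
    refine ⟨r + s ^ k⁻¹, lt_add_of_pos_right r (Real.rpow_pos_of_pos hs _), ?_⟩
    simp only [add_sub_cancel_left]
    exact Real.rpow_inv_rpow hs.le hk.ne'

lemma lintegral_Ioi_rpow_mul_eq_lintegral_sub_rpow {a : ℝ} (ha : 0 < a) (r d : ℝ) (G : ℝ → ℝ≥0∞) :
    ∫⁻ s in Ioi (0 : ℝ), ENNReal.ofReal (s ^ (d - 1)) * G s =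
      ∫⁻ t in Ioi r, ENNReal.ofReal (1 / a * (t - r) ^ (d / a - 1)) * G ((t - r) ^ (1 / a)) := by
  have hk : 0 < 1 / a := one_div_pos.2 ha
  have hderiv : ∀ t ∈ Ioi r, HasDerivWithinAt (fun t : ℝ => (t - r) ^ (1 / a))
      (1 / a * (t - r) ^ (1 / a - 1)) (Ioi r) t := fun t ht => by
    simpa using (((hasDerivAt_id t).sub_const r).rpow_const (p := 1 / a)
      (.inl (sub_pos.2 ht).ne')).hasDerivWithinAt
  have hmono : MonotoneOn (fun t : ℝ => (t - r) ^ (1 / a)) (Ioi r) := fun t ht t' _ htt' =>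
    Real.rpow_le_rpow (sub_pos.2 ht).le (sub_le_sub_right htt' r) hk.le
  rw [← image_sub_rpow_Ioi hk r, lintegral_image_eq_lintegral_deriv_mul_of_monotoneOn
    measurableSet_Ioi hderiv hmono]
  refine setLIntegral_congr_fun measurableSet_Ioi fun t ht => ?_
  have htr : 0 < t - r := sub_pos.2 ht
  rw [← mul_assoc, ← ENNReal.ofReal_mul (by positivity), ← Real.rpow_mul htr.le, mul_assoc,
    ← Real.rpow_add htr]
  ring_nf

lemma lintegral_Ioi_swap {α : Type*} [MeasurableSpace α] {μ : Measure α} [SFinite μ] {φ : α → ℝ}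
    (hφ : Measurable φ) (hφ0 : 0 ≤ φ) {g : α → ℝ → ℝ≥0∞} (hg : Measurable (Function.uncurry g)) :
    ∫⁻ y, (∫⁻ t in Ioi (φ y), g y t) ∂μ =
      ∫⁻ t in Ioi (0 : ℝ), ∫⁻ y in {y | φ y < t}, g y t ∂μ := by
  let region := {q : α × ℝ | φ q.1 < q.2}
  have hregion : MeasurableSet region := measurableSet_lt (by fun_prop) measurable_snd
  calc ∫⁻ y, (∫⁻ t in Ioi (φ y), g y t) ∂μ
      = ∫⁻ y, (∫⁻ t in Ioi (0 : ℝ), region.indicator (Function.uncurry g) (y, t)) ∂μ := by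
        refine lintegral_congr fun y => ?_
        rw [← inter_eq_self_of_subset_left (Ioi_subset_Ioi (hφ0 y)),
          ← setLIntegral_indicator measurableSet_Ioi]
        rfl
    _ = ∫⁻ t in Ioi (0 : ℝ), ∫⁻ y, region.indicator (Function.uncurry g) (y, t) ∂μ :=
        lintegral_lintegral_swap (hg.indicator hregion).aemeasurable
    _ = ∫⁻ t in Ioi (0 : ℝ), ∫⁻ y in {y | φ y < t}, g y t ∂μ := by
        refine lintegral_congr fun t => ?_
        rw [← lintegral_indicator (measurableSet_lt hφ measurable_const)]
        rfl

lemma setLIntegral_ball_eq_mul_setLIntegral_smul {E : Type*} [NormedAddCommGroup E]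
    [NormedSpace ℝ E] [MeasurableSpace E] [BorelSpace E] [FiniteDimensional ℝ E] (μ : Measure E)
    [μ.IsAddHaarMeasure] {c : ℝ} (hc : 0 < c) (G : E → ℝ≥0∞) :
    ∫⁻ y in ball 0 c, G y ∂μ =
      ENNReal.ofReal (c ^ Module.finrank ℝ E) * ∫⁻ y in ball 0 1, G (c • y) ∂μ := by
  have hemb : MeasurableEmbedding (c • · : E → E) :=
    (Homeomorph.smulOfNeZero c hc.ne').measurableEmbedding
  have hpre : (c • · : E → E) ⁻¹' ball 0 c = ball 0 1 := by
    ext y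
    simp [norm_smul, abs_of_pos hc, hc]
  have hscale : ENNReal.ofReal (c ^ Module.finrank ℝ E) • μ.map (c • ·) = μ := by
    rw [Measure.map_addHaar_smul μ hc.ne', smul_smul, ← ENNReal.ofReal_mul (by positivity),
      abs_of_pos (by positivity), mul_inv_cancel₀ (by positivity), ENNReal.ofReal_one, one_smul]
  calc ∫⁻ y in ball 0 c, G y ∂μ
      = ENNReal.ofReal (c ^ Module.finrank ℝ E) * ∫⁻ y in ball 0 c, G y ∂(μ.map (c • ·)) := by
        rw [← smul_eq_mul, ← lintegral_smul_measure, ← Measure.restrict_smul, hscale]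
    _ = ENNReal.ofReal (c ^ Module.finrank ℝ E) * ∫⁻ y in ball 0 1, G (c • y) ∂μ := by
        rw [hemb.restrict_map, hemb.lintegral_map, hpre]

end ChangeOfVariables

section SliceMeasure

/-- The weight `ω_𝐚(y) = (1 - |y|^{a₁})^{1/a₂}`: over `|y| < 1`, the unit level set of
`powGauge a₁ a₂` consists of the points `(y, ω_𝐚(y) • θ)` with `|θ| = 1`. -/
def sliceWeight {E₁ : Type*} [Norm E₁] (a₁ a₂ : ℝ) (y : E₁) : ℝ := (1 - ‖y‖ ^ a₁) ^ (1 / a₂)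

/-- The measure `ω_𝐚(y)^{d - a₂} dμ(y) dσ(θ)` on `|y| < 1`, pushed to the level set
`powGauge a₁ a₂ = 1` by `(y, θ) ↦ (y, ω_𝐚(y) • θ)`. The measure `σ` is meant to live on the unit
sphere of a `d`-dimensional space. -/
def sliceMeasure {E₁ E₂ : Type*} [NormedAddCommGroup E₁] [MeasurableSpace E₁] [SMul ℝ E₂]
    [MeasurableSpace E₂] (μ : Measure E₁) (σ : Measure E₂) (a₁ a₂ d : ℝ) : Measure (E₁ × E₂) :=
  (((μ.restrict (ball 0 1)).withDensity fun y =>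
    ENNReal.ofReal (sliceWeight a₁ a₂ y ^ (d - a₂))).prod σ).map
      fun q => (q.1, sliceWeight a₁ a₂ q.1 • q.2)

section Geometry

variable {E₁ : Type*} [NormedAddCommGroup E₁] {a₁ a₂ : ℝ}

lemma norm_rpow_lt_one {y : E₁} (hy : y ∈ ball 0 1) (ha₁ : 0 < a₁) : ‖y‖ ^ a₁ < 1 :=
  Real.rpow_lt_one (norm_nonneg y) (mem_ball_zero_iff.1 hy) ha₁

lemma setOf_norm_rpow_lt (ha₁ : 0 < a₁) {t : ℝ} (ht : 0 < t) :
    {y : E₁ | ‖y‖ ^ a₁ < t} = ball 0 (t ^ (1 / a₁)) := by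
  ext y
  rw [mem_ball_zero_iff, one_div, Real.lt_rpow_inv_iff_of_pos (norm_nonneg y) ht.le ha₁]
  rfl

lemma powGauge_sliceWeight_smul {E₂ : Type*} [NormedAddCommGroup E₂] [NormedSpace ℝ E₂]
    (ha₁ : 0 < a₁) (ha₂ : 0 < a₂) {y : E₁} (hy : y ∈ ball 0 1) {θ : E₂} (hθ : ‖θ‖ = 1) :
    powGauge a₁ a₂ (y, sliceWeight a₁ a₂ y • θ) = 1 := by
  rw [powGauge, sliceWeight,
    norm_rpow_smul_rpow ha₂.ne' (sub_pos.2 (norm_rpow_lt_one hy ha₁)).le, hθ]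
  simp

lemma sub_norm_rpow_smul_rpow_rpow [NormedSpace ℝ E₁] (ha₁ : 0 < a₁) (ha₂ : 0 < a₂) {t : ℝ}
    (ht : 0 < t) {y : E₁} (hy : y ∈ ball 0 1) (k : ℝ) :
    (t - ‖t ^ (1 / a₁) • y‖ ^ a₁) ^ k = t ^ k * sliceWeight a₁ a₂ y ^ (a₂ * k) := by
  have hy0 : 0 ≤ 1 - ‖y‖ ^ a₁ := (sub_pos.2 (norm_rpow_lt_one hy ha₁)).le
  rw [norm_rpow_smul_rpow ha₁.ne' ht.le, ← mul_one_sub, Real.mul_rpow ht.le hy0, sliceWeight,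
    ← Real.rpow_mul hy0, ← mul_assoc, one_div_mul_cancel ha₂.ne', one_mul]

lemma slice_integrand_dilate [NormedSpace ℝ E₁] {E₂ : Type*} [NormedAddCommGroup E₂]
    [NormedSpace ℝ E₂] [MeasurableSpace E₂] (σ : Measure E₂) (ha₁ : 0 < a₁) (ha₂ : 0 < a₂) {t : ℝ}
    (ht : 0 < t) (d : ℝ) (H : E₁ × E₂ → ℝ≥0∞) {y : E₁} (hy : y ∈ ball 0 1) :
    ENNReal.ofReal (1 / a₂ * (t - ‖t ^ (1 / a₁) • y‖ ^ a₁) ^ (d / a₂ - 1)) *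
        ∫⁻ θ, H (t ^ (1 / a₁) • y, (t - ‖t ^ (1 / a₁) • y‖ ^ a₁) ^ (1 / a₂) • θ) ∂σ =
      ENNReal.ofReal (t ^ (d / a₂ - 1) * (1 / a₂)) *
        (ENNReal.ofReal (sliceWeight a₁ a₂ y ^ (d - a₂)) *
          ∫⁻ θ, H (powDilation a₁ a₂ t (y, sliceWeight a₁ a₂ y • θ)) ∂σ) := by
  have jacobian : 1 / a₂ * (t - ‖t ^ (1 / a₁) • y‖ ^ a₁) ^ (d / a₂ - 1) =
      t ^ (d / a₂ - 1) * (1 / a₂) * sliceWeight a₁ a₂ y ^ (d - a₂) := by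
    rw [sub_norm_rpow_smul_rpow_rpow ha₁ ha₂ ht hy, mul_sub_one, mul_div_cancel₀ d ha₂.ne']
    ring
  have radius : (t - ‖t ^ (1 / a₁) • y‖ ^ a₁) ^ (1 / a₂) =
      t ^ (1 / a₂) * sliceWeight a₁ a₂ y := by
    rw [sub_norm_rpow_smul_rpow_rpow ha₁ ha₂ ht hy, mul_one_div_cancel ha₂.ne', Real.rpow_one]
  rw [jacobian, radius, ENNReal.ofReal_mul (by positivity), mul_assoc]
  simp only [powDilation, smul_smul]

end Geometry

variable {E₁ E₂ : Type*} [NormedAddCommGroup E₁] [MeasurableSpace E₁] [BorelSpace E₁]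
  [NormedAddCommGroup E₂] [NormedSpace ℝ E₂] [MeasurableSpace E₂] [BorelSpace E₂]
  {μ : Measure E₁} {σ : Measure E₂} {a₁ a₂ : ℝ}

lemma measurable_sliceWeight (a₁ a₂ : ℝ) : Measurable (sliceWeight a₁ a₂ : E₁ → ℝ) := by
  unfold sliceWeight
  fun_prop

lemma measurable_prodMk_sliceWeight_smul (a₁ a₂ : ℝ) :
    Measurable fun q : E₁ × E₂ => (q.1, sliceWeight a₁ a₂ q.1 • q.2) :=
  measurable_fst.prodMk (((measurable_sliceWeight a₁ a₂).comp measurable_fst).smul measurable_snd)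

lemma lintegral_sliceMeasure [SFinite σ] (μ : Measure E₁) (a₁ a₂ d : ℝ) {F : E₁ × E₂ → ℝ≥0∞}
    (hF : Measurable F) :
    ∫⁻ p, F p ∂(sliceMeasure μ σ a₁ a₂ d) =
      ∫⁻ y in ball 0 1, ENNReal.ofReal (sliceWeight a₁ a₂ y ^ (d - a₂)) *
        ∫⁻ θ, F (y, sliceWeight a₁ a₂ y • θ) ∂σ ∂μ := by
  have hFmap : Measurable fun q : E₁ × E₂ => F (q.1, sliceWeight a₁ a₂ q.1 • q.2) :=
    hF.comp (measurable_prodMk_sliceWeight_smul a₁ a₂)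
  have hdensity : Measurable fun y : E₁ => ENNReal.ofReal (sliceWeight a₁ a₂ y ^ (d - a₂)) :=
    ((measurable_sliceWeight a₁ a₂).pow_const _).ennreal_ofReal
  rw [sliceMeasure, lintegral_map hF (measurable_prodMk_sliceWeight_smul a₁ a₂),
    lintegral_prod _ hFmap.aemeasurable,
    lintegral_withDensity_eq_lintegral_mul _ hdensity hFmap.lintegral_prod_right']
  rfl

lemma ae_powGauge_eq_one_sliceMeasure (ha₁ : 0 < a₁) (ha₂ : 0 < a₂) (d : ℝ)
    (hσ : ∀ᵐ θ ∂σ, ‖θ‖ = 1) : ∀ᵐ p ∂(sliceMeasure μ σ a₁ a₂ d), powGauge a₁ a₂ p = 1 := by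
  have hgauge : Measurable (powGauge a₁ a₂ : E₁ × E₂ → ℝ) := by
    unfold powGauge
    fun_prop
  rw [sliceMeasure, ae_map_iff (measurable_prodMk_sliceWeight_smul a₁ a₂).aemeasurable
    (measurableSet_eq_fun hgauge measurable_const)]
  have hball : ∀ᵐ y ∂((μ.restrict (ball 0 1)).withDensity fun y =>
      ENNReal.ofReal (sliceWeight a₁ a₂ y ^ (d - a₂))), y ∈ ball 0 1 :=
    (withDensity_absolutelyContinuous _ _).ae_le (ae_restrict_mem measurableSet_ball)
  filter_upwards [Measure.quasiMeasurePreserving_fst.ae hball,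
    Measure.quasiMeasurePreserving_snd.ae hσ] with q hy hθ
  exact powGauge_sliceWeight_smul ha₁ ha₂ hy hθ

lemma comparableMeasures_sliceMeasure {τ : Measure E₂} [SFinite σ] [SFinite τ]
    (h : ComparableMeasures σ τ) (μ : Measure E₁) (a₁ a₂ d : ℝ) :
    ComparableMeasures (sliceMeasure μ σ a₁ a₂ d) (sliceMeasure μ τ a₁ a₂ d) :=
  (h.prod_right _).map (measurable_prodMk_sliceWeight_smul a₁ a₂)

section Dilation

variable [NormedSpace ℝ E₁] {t : ℝ}

lemma setLIntegral_norm_rpow_lt_eq_lintegral_sliceMeasure [FiniteDimensional ℝ E₁]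
    [μ.IsAddHaarMeasure] [SFinite σ] (ha₁ : 0 < a₁) (ha₂ : 0 < a₂) (ht : 0 < t) (d : ℝ)
    {H : E₁ × E₂ → ℝ≥0∞} (hH : Measurable H) :
    ∫⁻ y in {y | ‖y‖ ^ a₁ < t}, ENNReal.ofReal (1 / a₂ * (t - ‖y‖ ^ a₁) ^ (d / a₂ - 1)) *
        ∫⁻ θ, H (y, (t - ‖y‖ ^ a₁) ^ (1 / a₂) • θ) ∂σ ∂μ =
      ENNReal.ofReal (t ^ (Module.finrank ℝ E₁ / a₁ + d / a₂ - 1)) *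
        ∫⁻ p, H (powDilation a₁ a₂ t p) ∂(ENNReal.ofReal (1 / a₂) • sliceMeasure μ σ a₁ a₂ d) := by
  have hdilate : Measurable (powDilation a₁ a₂ t : E₁ × E₂ → E₁ × E₂) := by
    unfold powDilation
    fun_prop
  have jacobian : (t ^ (1 / a₁)) ^ Module.finrank ℝ E₁ * t ^ (d / a₂ - 1) =
      t ^ (Module.finrank ℝ E₁ / a₁ + d / a₂ - 1) := by
    rw [← Real.rpow_mul_natCast ht.le, ← Real.rpow_add ht]
    ring_nf
  calc
    _ = ENNReal.ofReal ((t ^ (1 / a₁)) ^ Module.finrank ℝ E₁) *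
          (ENNReal.ofReal (t ^ (d / a₂ - 1) * (1 / a₂)) *
            ∫⁻ p, H (powDilation a₁ a₂ t p) ∂(sliceMeasure μ σ a₁ a₂ d)) := by
        rw [setOf_norm_rpow_lt ha₁ ht,
          setLIntegral_ball_eq_mul_setLIntegral_smul μ (by positivity),
          setLIntegral_congr_fun measurableSet_ball fun y hy =>
            slice_integrand_dilate σ ha₁ ha₂ ht d H hy,
          lintegral_const_mul' _ _ ENNReal.ofReal_ne_top,
          lintegral_sliceMeasure (F := fun p => H (powDilation a₁ a₂ t p)) μ a₁ a₂ d
            (hH.comp hdilate)]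
    _ = _ := by
        rw [lintegral_smul_measure, smul_eq_mul, ← mul_assoc, ← mul_assoc, ← jacobian,
          ← ENNReal.ofReal_mul (by positivity), ← ENNReal.ofReal_mul (by positivity), mul_assoc]

theorem hasPolarDecomposition_powDilation [FiniteDimensional ℝ E₁] {ν : Measure E₂}
    [μ.IsAddHaarMeasure] [SFinite ν] [SFinite σ] {d : ℝ}
    (hpolar : HasPolarDecomposition ν (fun t x => t • x) d σ) (ha₁ : 0 < a₁) (ha₂ : 0 < a₂) :
    HasPolarDecomposition (μ.prod ν) (powDilation a₁ a₂) (Module.finrank ℝ E₁ / a₁ + d / a₂)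
      (ENNReal.ofReal (1 / a₂) • sliceMeasure μ σ a₁ a₂ d) := by
  intro H hH
  calc ∫⁻ p, H p ∂(μ.prod ν)
      = ∫⁻ y, ∫⁻ z, H (y, z) ∂ν ∂μ := lintegral_prod _ hH.aemeasurable
    _ = ∫⁻ y, (∫⁻ t in Ioi (‖y‖ ^ a₁), ENNReal.ofReal (1 / a₂ * (t - ‖y‖ ^ a₁) ^ (d / a₂ - 1)) *
          ∫⁻ θ, H (y, (t - ‖y‖ ^ a₁) ^ (1 / a₂) • θ) ∂σ) ∂μ := by
        refine lintegral_congr fun y => ?_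
        rw [hpolar (fun z => H (y, z)) (hH.comp measurable_prodMk_left)]
        exact lintegral_Ioi_rpow_mul_eq_lintegral_sub_rpow ha₂ _ d _
    _ = ∫⁻ t in Ioi (0 : ℝ), ∫⁻ y in {y | ‖y‖ ^ a₁ < t},
          ENNReal.ofReal (1 / a₂ * (t - ‖y‖ ^ a₁) ^ (d / a₂ - 1)) *
            ∫⁻ θ, H (y, (t - ‖y‖ ^ a₁) ^ (1 / a₂) • θ) ∂σ ∂μ :=
        lintegral_Ioi_swap (by fun_prop) (fun y => by positivity) (by fun_prop)
    _ = _ := setLIntegral_congr_fun measurableSet_Ioi fun t ht =>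
        setLIntegral_norm_rpow_lt_eq_lintegral_sliceMeasure ha₁ ha₂ ht d hH

end Dilation

end SliceMeasure

/-! ### Comparison with the slice measure -/

section Comparison

variable {E₁ E₂ : Type*} [NormedAddCommGroup E₁] [NormedSpace ℝ E₁] [FiniteDimensional ℝ E₁]
  [MeasurableSpace E₁] [BorelSpace E₁]
  [NormedAddCommGroup E₂] [NormedSpace ℝ E₂] [FiniteDimensional ℝ E₂]
  [MeasurableSpace E₂] [BorelSpace E₂] {a₁ a₂ : ℝ}

lemma comparableMeasures_levelSetMeasure_sliceMeasure [Nontrivial E₂] (ha₁ : 1 ≤ a₁) (ha₂ : 1 ≤ a₂)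
    (μ : Measure E₁) [μ.IsAddHaarMeasure] :
    ComparableMeasures (levelSetMeasure (powGauge a₁ a₂ : E₁ × E₂ → ℝ))
      (sliceMeasure μ (unitSphereMeasure E₂) a₁ a₂ (Module.finrank ℝ E₂)) := by
  have ha₁0 : 0 < a₁ := zero_lt_one.trans_le ha₁
  have ha₂0 : 0 < a₂ := zero_lt_one.trans_le ha₂
  let ν : Measure E₂ := Measure.addHaar
  have hpolar := hasPolarDecomposition_powDilation (μ := μ) (hasPolarDecomposition_smul ν) ha₁0 ha₂0
  have hunit := ae_powGauge_eq_one_sliceMeasure (μ := μ) ha₁0 ha₂0 (Module.finrank ℝ E₂)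
    (ae_norm_eq_one_polarSphereMeasure ν)
  have hsphere := comparableMeasures_sliceMeasure (comparableMeasures_unitSphereMeasure ν) μ a₁ a₂
    (Module.finrank ℝ E₂)
  refine ((isHomogeneousGauge_powGauge ha₁ ha₂).comparableMeasures_levelSetMeasure hpolar
    (Measure.ae_smul_measure hunit _)).trans (.trans ?_ hsphere.symm)
  exact .smul_self (ENNReal.ofReal_pos.2 (one_div_pos.2 ha₂0)).ne' ENNReal.ofReal_ne_top _

lemma map_swap_levelSetMeasure_powGauge (a₁ a₂ : ℝ) :
    (levelSetMeasure (powGauge a₂ a₁ : E₂ × E₁ → ℝ)).map Prod.swap =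
      levelSetMeasure (powGauge a₁ a₂ : E₁ × E₂ → ℝ) := by
  let swap : E₂ × E₁ ≃ᵢ E₁ × E₂ :=
    ⟨Equiv.prodComm E₂ E₁, fun p q => max_comm (edist p.2 q.2) (edist p.1 q.1)⟩
  have hpre : swap ⁻¹' (powGauge a₁ a₂ ⁻¹' {1}) = powGauge a₂ a₁ ⁻¹' {1} := by
    ext p
    change ‖p.2‖ ^ a₁ + ‖p.1‖ ^ a₂ = 1 ↔ ‖p.1‖ ^ a₂ + ‖p.2‖ ^ a₁ = 1
    rw [add_comm]
  have hdim : Module.finrank ℝ (E₂ × E₁) = Module.finrank ℝ (E₁ × E₂) := by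
    simp [add_comm]
  have hmap := ((swap.measurePreserving_hausdorffMeasure (Module.finrank ℝ (E₁ × E₂) - 1)
    ).restrict_preimage_emb swap.toHomeomorph.measurableEmbedding (powGauge a₁ a₂ ⁻¹' {1})).map_eq
  rw [hpre] at hmap
  rw [levelSetMeasure, levelSetMeasure, hdim, ← hpre, swap.hausdorffMeasure_preimage, hpre,
    Measure.map_smul]
  exact congrArg _ hmap

theorem bilinear_average_slicing_general [Nontrivial E₁] [Nontrivial E₂] (ha₁ : 1 ≤ a₁)
    (ha₂ : 1 ≤ a₂) (μ₁ : Measure E₁) [μ₁.IsAddHaarMeasure] (μ₂ : Measure E₂)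
    [μ₂.IsAddHaarMeasure] :
    ∃ c C : ℝ≥0, 0 < c ∧ ∀ F : E₁ × E₂ → ℝ≥0∞, Measurable F →
      let average := ∫⁻ p, F p ∂(levelSetMeasure (powGauge a₁ a₂))
      let J := ∫⁻ p, F p ∂(sliceMeasure μ₁ (unitSphereMeasure E₂) a₁ a₂ (Module.finrank ℝ E₂))
      let J' :=
        ∫⁻ p, F p.swap ∂(sliceMeasure μ₂ (unitSphereMeasure E₁) a₂ a₁ (Module.finrank ℝ E₁))
      (c * J ≤ average ∧ average ≤ C * J) ∧ (c * J' ≤ average ∧ average ≤ C * J') := by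
  have hslice := comparableMeasures_levelSetMeasure_sliceMeasure (E₂ := E₂) ha₁ ha₂ μ₁
  have hslice' := (comparableMeasures_levelSetMeasure_sliceMeasure (E₂ := E₁) ha₂ ha₁ μ₂).map
    measurable_swap
  rw [map_swap_levelSetMeasure_powGauge] at hslice'
  obtain ⟨C, hC, hJ, hJ'⟩ := ((Filter.eventually_gt_atTop 0).and
    (hslice.lintegral_le.and hslice'.lintegral_le)).exists
  refine ⟨C⁻¹, C, inv_pos.2 hC, fun F hF => ⟨hJ F, ?_⟩⟩
  simpa only [lintegral_map hF measurable_swap] using hJ' F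

end Comparison

section Euclidean

lemma μS2_eq_levelSetMeasure (n : ℕ) (a₁ a₂ : ℝ) :
    μS2 n a₁ a₂ = levelSetMeasure (powGauge a₁ a₂) := by
  rw [μS2, levelSetMeasure, Module.finrank_prod, finrank_euclideanSpace_fin, Nat.cast_add,
    ← two_mul]
  rfl

lemma Jslice_eq_lintegral_sliceMeasure (n : ℕ) [NeZero n] (a₁ a₂ : ℝ) {f g : Rn n → ℝ}
    (hf : Measurable f) (hg : Measurable g) (t₁ t₂ : ℝ) (x : Rn n) :
    Jslice n a₁ a₂ f g t₁ t₂ x =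
      ∫⁻ p, ENNReal.ofReal (f (x - t₁ • p.1)) * ENNReal.ofReal (g (x - t₂ • p.2))
        ∂(sliceMeasure volume (unitSphereMeasure (Rn n)) a₁ a₂ (Module.finrank ℝ (Rn n))) := by
  rw [lintegral_sliceMeasure _ _ _ _ (by fun_prop)]
  refine lintegral_congr fun y => ?_
  simp only [smul_smul]
  rw [lintegral_const_mul' _ _ ENNReal.ofReal_ne_top, unitSphereMeasure,
    finrank_euclideanSpace_fin, mul_comm]
  rfl

end Euclidean

/-- Slicing formula (the identities (2.4) and (2.5) of the paper): the bilinear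
average over `S₂^𝐚` is comparable to the sliced integrals `J` and `J̃`. -/
theorem bilinear_average_slicing
    (n : ℕ) (hn : 2 ≤ n) (a₁ a₂ : ℝ) (ha₁ : 1 ≤ a₁) (ha₂ : 1 ≤ a₂) :
    ∃ c C : ℝ≥0, 0 < c ∧ ∀ f g : Rn n → ℝ,
      Measurable f → Measurable g → (∀ y, 0 ≤ f y) → (∀ y, 0 ≤ g y) →
      ∀ (x : Rn n) (t₁ t₂ : ℝ), 0 < t₁ → 0 < t₂ →
        ((c : ℝ≥0∞) * Jslice n a₁ a₂ f g t₁ t₂ x ≤ biAvgE n a₁ a₂ f g t₁ t₂ x ∧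
          biAvgE n a₁ a₂ f g t₁ t₂ x ≤ (C : ℝ≥0∞) * Jslice n a₁ a₂ f g t₁ t₂ x) ∧
        ((c : ℝ≥0∞) * Jslice n a₂ a₁ g f t₂ t₁ x ≤ biAvgE n a₁ a₂ f g t₁ t₂ x ∧
          biAvgE n a₁ a₂ f g t₁ t₂ x ≤ (C : ℝ≥0∞) * Jslice n a₂ a₁ g f t₂ t₁ x) := by
  have : NeZero n := ⟨by lia⟩
  obtain ⟨c, C, hc, hslicing⟩ := bilinear_average_slicing_general (E₁ := Rn n) (E₂ := Rn n)
    ha₁ ha₂ volume volume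
  refine ⟨c, C, hc, fun f g hf hg _ _ x t₁ t₂ _ _ => ?_⟩
  rw [Jslice_eq_lintegral_sliceMeasure n a₁ a₂ hf hg,
    Jslice_eq_lintegral_sliceMeasure n a₂ a₁ hg hf, biAvgE, μS2_eq_levelSetMeasure]
  simpa only [Prod.fst_swap, Prod.snd_swap, mul_comm] using hslicing
    (fun p => ENNReal.ofReal (f (x - t₁ • p.1)) * ENNReal.ofReal (g (x - t₂ • p.2))) (by fun_prop)
end
end

section
/- Let n ≥ 2 and 𝐚 = (a₁,a₂) ∈ [1,∞)² with a₁ ≤ n and a₂ ≤ n. Then there is a constant C such that for all nonnegative measurable f, g on ℝⁿ and all x ∈ ℝⁿ: 𝔐^𝐚(f,g)(x) ≤ C · Mf(x) · ℳ_s g(x), and 𝔐^𝐚(f,g)(x) ≤ C · ℳ_s f(x) · Mg(x). -/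
open MeasureTheory Metric Set
open scoped ENNReal NNReal

noncomputable section

/-- The biparametric bilinear maximal function `𝔐^𝐚(f,g)` (for nonnegative `f`, `g`). -/
def biMaxE (n : ℕ) (a₁ a₂ : ℝ) (f g : Rn n → ℝ) (x : Rn n) : ℝ≥0∞ :=
  ⨆ t₁ ∈ Ioi (0 : ℝ), ⨆ t₂ ∈ Ioi (0 : ℝ), biAvgE n a₁ a₂ f g t₁ t₂ x

/-- The Hardy–Littlewood maximal function on `ℝⁿ`. -/
def HLMax (n : ℕ) (f : Rn n → ℝ) (x : Rn n) : ℝ≥0∞ :=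
  ⨆ r ∈ Ioi (0 : ℝ), (∫⁻ y in ball x r, ENNReal.ofReal |f y|) / volume (ball x r)

/-- The spherical maximal function `ℳ_s`. -/
def sphMax (n : ℕ) (f : Rn n → ℝ) (x : Rn n) : ℝ≥0∞ :=
  ⨆ t ∈ Ioi (0 : ℝ), sphAvgE n f x t

/-!
In polar coordinates for the second variable, `S₂^𝐚` is the graph `(y, φ) ↦ (y, ω_𝐚(y) φ)` over the
unit ball times the unit sphere. Its surface measure has density `ω_𝐚^{n-1} |∇ω_𝐚|`, up to lower
order terms, with respect to `dy ⊗ dσ(φ)`, and `ω_𝐚^{n-1} |∇ω_𝐚| ≲ ω_𝐚^{n-a₂}` is bounded because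
`a₂ ≤ n`. Integrating over `φ` first gives spherical averages of `g` of radius `t₂ ω_𝐚(y)`, bounded
by `ℳ_s g(x)`; the remaining integral in `y` is an average of `f` over a ball, bounded by `Mf(x)`.
Exchanging the two variables gives the second inequality.

As surface measures are Hausdorff measures here, the density bound is replaced by a Vitali covering
argument: `μH[s] ≲ ν` on a set at whose points `ν (closedBall x r) ≳ r ^ s` for small `r`. For `ν`
the image of `dy ⊗ dσ`, the ball of radius `r` around `(y₀, ρ θ) ∈ S₂^𝐚` contains the image of a
shell of thickness `≈ ρ^{n-1} r` in `closedBall y₀ r` times a spherical cap of radius `≈ r / ρ`,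
which has measure `≈ r ^ (2n-1)`.
-/

section HausdorffComparison

open Filter
open scoped Topology

lemma ediam_closedBall_le_two_mul_ofReal {X : Type*} [PseudoMetricSpace X] {x : X} {r : ℝ}
    (hr : 0 ≤ r) : ediam (closedBall x r) ≤ 2 * ENNReal.ofReal r := by
  rw [← Metric.closedEBall_ofReal hr]
  exact Metric.ediam_closedEBall_le

variable {X : Type*} [MetricSpace X] [MeasurableSpace X] [BorelSpace X] {ν : Measure X} {s : ℝ}
  {A U : Set X}

variable (ν) in
lemma exists_countable_disjoint_closedBall_cover [SFinite ν] {ρ : X → ℝ} {δ : ℝ}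
    (hρ : ∀ x ∈ A, 0 < ρ x) (hρδ : ∀ x ∈ A, ρ x ≤ δ)
    (hν : ∀ x ∈ A, ν (closedBall x (ρ x)) ≠ 0) :
    ∃ u ⊆ A, u.Countable ∧ u.PairwiseDisjoint (fun x ↦ closedBall x (ρ x)) ∧
      A ⊆ ⋃ x : u, closedBall (x : X) (5 * ρ x) := by
  obtain ⟨u, hu, hdisj, hcover⟩ :=
    Vitali.exists_disjoint_subfamily_covering_enlargement_closedBall A id ρ δ hρδ 5 (by norm_num)
  refine ⟨u, hu, ?_, hdisj, fun x hx ↦ ?_⟩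
  · have hcount := Measure.countable_meas_pos_of_disjoint_iUnion₀ (μ := ν)
      (As := fun x : u ↦ closedBall (x : X) (ρ x))
      (fun x ↦ isClosed_closedBall.measurableSet.nullMeasurableSet)
      (fun x y hxy ↦ (hdisj x.2 y.2 (Subtype.coe_ne_coe.2 hxy)).aedisjoint)
    have hpos (x : u) : 0 < ν (closedBall (x : X) (ρ x)) := pos_iff_ne_zero.2 (hν x (hu x.2))
    simpa only [hpos, ofPred_true, countable_univ_iff, countable_coe_iff] using hcount
  · obtain ⟨y, hy, hsub⟩ := hcover x hx
    exact mem_iUnion.2 ⟨⟨y, hy⟩, hsub (mem_closedBall_self (hρ x hx).le)⟩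

lemma tsum_ediam_closedBall_rpow_le (hs : 0 ≤ s) {u : Set X} {ρ : X → ℝ} (hu : u.Countable)
    (hρ : ∀ x ∈ u, 0 < ρ x) (hdisj : u.PairwiseDisjoint (fun x ↦ closedBall x (ρ x)))
    (hU : ∀ x ∈ u, closedBall x (ρ x) ⊆ U)
    (hν : ∀ x ∈ u, ENNReal.ofReal (ρ x) ^ s ≤ ν (closedBall x (ρ x))) :
    ∑' x : u, ediam (closedBall (x : X) (5 * ρ x)) ^ s ≤ 10 ^ s * ν U := by
  have hterm (x : u) :
      ediam (closedBall (x : X) (5 * ρ x)) ^ s ≤ 10 ^ s * ν (closedBall (x : X) (ρ x)) := calc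
    _ ≤ (10 * ENNReal.ofReal (ρ x)) ^ s := by
      gcongr
      refine (ediam_closedBall_le_two_mul_ofReal (by linarith [hρ x x.2])).trans_eq ?_
      rw [ENNReal.ofReal_mul (by norm_num), ← mul_assoc]
      norm_num
    _ ≤ 10 ^ s * ν (closedBall (x : X) (ρ x)) := by
      rw [ENNReal.mul_rpow_of_nonneg _ _ hs]
      gcongr
      exact hν x x.2
  have := hu.to_subtype
  calc
    _ ≤ ∑' x : u, 10 ^ s * ν (closedBall (x : X) (ρ x)) := ENNReal.tsum_le_tsum hterm
    _ = 10 ^ s * ν (⋃ x ∈ u, closedBall x (ρ x)) := by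
      rw [ENNReal.tsum_mul_left,
        measure_biUnion hu hdisj fun x _ ↦ isClosed_closedBall.measurableSet]
    _ ≤ 10 ^ s * ν U := by
      gcongr
      exact iUnion₂_subset hU

lemma exists_closedBall_cover_tsum_ediam_rpow_le [SFinite ν] (hs : 0 ≤ s) (hU : IsOpen U)
    (hAU : A ⊆ U) (h : ∀ x ∈ A, ∃ᶠ r in 𝓝[>] (0 : ℝ), ENNReal.ofReal r ^ s ≤ ν (closedBall x r))
    {δ : ℝ} (hδ : 0 < δ) :
    ∃ (u : Set X) (R : X → ℝ), u.Countable ∧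
      (∀ x : u, ediam (closedBall (x : X) (R x)) ≤ ENNReal.ofReal δ) ∧
      A ⊆ ⋃ x : u, closedBall (x : X) (R x) ∧
      ∑' x : u, ediam (closedBall (x : X) (R x)) ^ s ≤ 10 ^ s * ν U := by
  have hradius (x : X) (hx : x ∈ A) : ∃ r, 0 < r ∧ r ≤ δ / 10 ∧ closedBall x r ⊆ U ∧
      ENNReal.ofReal r ^ s ≤ ν (closedBall x r) := by
    have hsmall : ∀ᶠ r in 𝓝 (0 : ℝ), r ≤ δ / 10 ∧ closedBall x r ⊆ U :=
      (eventually_le_nhds (by positivity)).and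
        (eventually_closedBall_subset (hU.mem_nhds (hAU hx)))
    obtain ⟨r, hr, hr₀, hrδ, hrU⟩ := ((h x hx).and_eventually
      (eventually_mem_nhdsWithin.and (eventually_nhdsWithin_of_eventually_nhds hsmall))).exists
    exact ⟨r, hr₀, hrδ, hrU, hr⟩
  choose! ρ hρ hρδ hρU hρν using hradius
  have hρν₀ (x : X) (hx : x ∈ A) : ν (closedBall x (ρ x)) ≠ 0 :=
    ((ENNReal.rpow_pos (ENNReal.ofReal_pos.2 (hρ x hx)) ENNReal.ofReal_ne_top).trans_le
      (hρν x hx)).ne'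
  obtain ⟨u, hu, hcount, hdisj, hcover⟩ := exists_countable_disjoint_closedBall_cover ν hρ hρδ hρν₀
  refine ⟨u, fun x ↦ 5 * ρ x, hcount, fun x ↦ ?_, hcover,
    tsum_ediam_closedBall_rpow_le hs hcount (fun x hx ↦ hρ x (hu hx)) hdisj
      (fun x hx ↦ hρU x (hu hx)) fun x hx ↦ hρν x (hu hx)⟩
  refine (ediam_closedBall_le_two_mul_ofReal (by linarith [hρ x (hu x.2)])).trans ?_
  rw [← ENNReal.ofReal_ofNat 2, ← ENNReal.ofReal_mul zero_le_two]
  exact ENNReal.ofReal_le_ofReal (by linarith [hρδ x (hu x.2)])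

theorem hausdorffMeasure_le_of_frequently_rpow_le [SFinite ν] [ν.OuterRegular] (hs : 0 ≤ s)
    (h : ∀ x ∈ A, ∃ᶠ r in 𝓝[>] (0 : ℝ), ENNReal.ofReal r ^ s ≤ ν (closedBall x r)) :
    μH[s] A ≤ 10 ^ s * ν A := by
  have hopen (U : Set X) (hAU : A ⊆ U) (hU : IsOpen U) : μH[s] A ≤ 10 ^ s * ν U := by
    choose u R hcount hdiam hcover hsum using fun m : ℕ ↦
      exists_closedBall_cover_tsum_ediam_rpow_le hs hU hAU h (Nat.one_div_pos_of_nat (n := m))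
    have (m : ℕ) : Countable (u m) := (hcount m).to_subtype
    have hlim : Tendsto (fun m : ℕ ↦ ENNReal.ofReal (1 / ((m : ℝ) + 1))) atTop (𝓝 0) := by
      simpa using ENNReal.tendsto_ofReal (tendsto_one_div_add_atTop_nhds_zero_nat (𝕜 := ℝ))
    exact (Measure.hausdorffMeasure_le_liminf_tsum s A _ hlim
      (fun m (x : u m) ↦ closedBall (x : X) (R m x)) (.of_forall hdiam)
      (.of_forall hcover)).trans (liminf_le_of_frequently_le' (.of_forall hsum))
  have hconst : (10 : ℝ≥0∞) ^ s ≠ ∞ := ENNReal.rpow_ne_top_of_nonneg hs (by norm_num)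
  have hconst₀ : (10 : ℝ≥0∞) ^ s ≠ 0 := by simp [hs.not_gt]
  simpa only [A.measure_eq_iInf_isOpen ν, ENNReal.mul_iInf_of_ne hconst₀ hconst, le_iInf_iff]

theorem le_hausdorffMeasure_of_closedBall_le
    (h : ∀ x r, 0 < r → ν (closedBall x r) ≤ ENNReal.ofReal r ^ s) : ν ≤ μH[s] := by
  refine Measure.le_hausdorffMeasure s ν 1 one_pos fun A hA ↦ ?_
  obtain rfl | ⟨x, hx⟩ := A.eq_empty_or_nonempty
  · simp
  have hfin : ediam A ≠ ∞ := ne_top_of_le_ne_top ENNReal.one_ne_top hA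
  have hbound : ∀ᶠ r in 𝓝[>] (ediam A).toReal, ν A ≤ ENNReal.ofReal r ^ s := by
    filter_upwards [self_mem_nhdsWithin] with r (hr : (ediam A).toReal < r)
    refine (measure_mono fun y hy ↦ ?_).trans (h x r (ENNReal.toReal_nonneg.trans_lt hr))
    rw [mem_closedBall, dist_edist]
    exact (ENNReal.toReal_mono hfin (edist_le_ediam_of_mem hy hx)).trans hr.le
  have hlim : Tendsto (fun r ↦ ENNReal.ofReal r ^ s) (𝓝[>] (ediam A).toReal)
      (𝓝 (ENNReal.ofReal (ediam A).toReal ^ s)) :=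
    ((ENNReal.continuous_rpow_const.comp ENNReal.continuous_ofReal).tendsto _).mono_left
      nhdsWithin_le_nhds
  rw [ENNReal.ofReal_toReal hfin] at hlim
  exact ge_of_tendsto hlim hbound

end HausdorffComparison

section PolarCoordinates

open Module
open scoped Pointwise

lemma volumeIoiPow_Ico_mem_Icc (k : ℕ) {a b : ℝ} (ha : 0 < a) (hb : 0 ≤ b) :
    Measure.volumeIoiPow k {r : Ioi (0 : ℝ) | (r : ℝ) ∈ Ico a b} ∈
      Icc (ENNReal.ofReal ((b - a) * a ^ k)) (ENNReal.ofReal ((b - a) * b ^ k)) := by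
  set I : Set (Ioi (0 : ℝ)) := {r | (r : ℝ) ∈ Ico a b}
  have hI : MeasurableSet I := measurable_subtype_coe measurableSet_Ico
  have hlen : Measure.comap (Subtype.val : Ioi (0 : ℝ) → ℝ) volume I = ENNReal.ofReal (b - a) := by
    have himage : Subtype.val '' I = Ico a b :=
      Subtype.coe_image_of_subset fun r hr ↦ ha.trans_le hr.1
    rw [comap_subtype_coe_apply measurableSet_Ioi, himage, Real.volume_Ico]
  rw [ENNReal.ofReal_mul' (by positivity), ENNReal.ofReal_mul' (by positivity), ← hlen, mul_comm,
    mul_comm _ (ENNReal.ofReal (b ^ k)), Measure.volumeIoiPow, withDensity_apply _ hI,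
    ← setLIntegral_const, ← setLIntegral_const]
  constructor
  · refine setLIntegral_mono' hI fun r hr ↦ ENNReal.ofReal_le_ofReal ?_
    exact pow_le_pow_left₀ ha.le hr.1 k
  · refine setLIntegral_mono' hI fun r hr ↦ ENNReal.ofReal_le_ofReal ?_
    exact pow_le_pow_left₀ r.2.out.le hr.2.le k

variable {E : Type*} [NormedAddCommGroup E] [NormedSpace ℝ E]

lemma dist_smul_smul_le {θ : E} (hθ : ‖θ‖ = 1) (θ' : E) (t s : ℝ) :
    dist (t • θ) (s • θ') ≤ |t - s| + |s| * dist θ θ' := by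
  refine (dist_triangle _ (s • θ) _).trans_eq ?_
  rw [dist_smul₀, Real.norm_eq_abs, dist_eq_norm, ← sub_smul, norm_smul, hθ, mul_one,
    Real.norm_eq_abs]

lemma inv_norm_smul_mem_sphere {w : E} (hw : w ≠ 0) : ‖w‖⁻¹ • w ∈ sphere (0 : E) 1 :=
  mem_sphere_zero_iff_norm.2 (norm_smul_inv_norm (𝕜 := ℝ) hw)

lemma dist_inv_norm_smul_le {θ w : E} (hθ : ‖θ‖ = 1) (hw : w ≠ 0) :
    dist (‖w‖⁻¹ • w) θ ≤ 2 * dist w θ := by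
  have hradial : dist (‖w‖⁻¹ • w) w ≤ dist w θ := calc
    dist (‖w‖⁻¹ • w) w = ‖(1 - ‖w‖) • ‖w‖⁻¹ • w‖ := by
      rw [sub_smul, one_smul, smul_inv_smul₀ (norm_ne_zero_iff.2 hw), dist_eq_norm]
    _ = |‖θ‖ - ‖w‖| := by
      rw [norm_smul, norm_eq_of_mem_sphere ⟨_, inv_norm_smul_mem_sphere hw⟩, mul_one, hθ,
        Real.norm_eq_abs]
    _ ≤ dist w θ := by
      rw [dist_comm, dist_eq_norm]
      exact abs_norm_sub_norm_le θ w
  linarith [dist_triangle (‖w‖⁻¹ • w) w θ]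

lemma finrank_sub_one_add_one_of_mem_sphere [FiniteDimensional ℝ E] (θ : sphere (0 : E) 1) :
    finrank ℝ E - 1 + 1 = finrank ℝ E :=
  have : Nontrivial E := ⟨θ, 0, ne_zero_of_mem_unit_sphere θ⟩
  Nat.sub_add_cancel finrank_pos

lemma ball_subset_Ico_smul_image_closedBall (θ : sphere (0 : E) 1) {r : ℝ} (hr : r ≤ 1) :
    ball (θ : E) (r / 2) ⊆ Ico (1 - r / 2) (1 + r / 2) • (Subtype.val '' closedBall θ r) := by
  intro w hw
  rw [mem_ball] at hw
  have hθ := norm_eq_of_mem_sphere θ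
  have hnorm : |‖w‖ - 1| < r / 2 := by
    rw [← hθ]
    exact (abs_norm_sub_norm_le w θ).trans_lt (by rwa [← dist_eq_norm])
  obtain ⟨hlow, hupp⟩ := abs_lt.1 hnorm
  have hw₀ : w ≠ 0 := norm_pos_iff.1 (by linarith)
  refine ⟨‖w‖, ⟨by linarith, by linarith⟩, ‖w‖⁻¹ • w, ⟨⟨_, inv_norm_smul_mem_sphere hw₀⟩, ?_, rfl⟩,
    smul_inv_smul₀ (norm_ne_zero_iff.2 hw₀) w⟩
  rw [mem_closedBall, Subtype.dist_eq]
  linarith [dist_inv_norm_smul_le hθ hw₀]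

lemma Ico_smul_image_closedBall_subset {y₀ : E} (θ : sphere (0 : E) 1) (hθ : ‖y₀‖ • (θ : E) = y₀)
    {r ε : ℝ} (hε : ε ≤ r / 2) (hr₀ : 0 < r) (hr : r ≤ ‖y₀‖) :
    Ico (‖y₀‖ - ε) ‖y₀‖ • (Subtype.val '' closedBall θ (r / (2 * ‖y₀‖))) ⊆
      {y ∈ closedBall y₀ r | ‖y‖ ∈ Ico (‖y₀‖ - ε) ‖y₀‖} := by
  rintro _ ⟨t, ht, _, ⟨φ, hφ, rfl⟩, rfl⟩
  have hy₀ : 0 < ‖y₀‖ := by linarith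
  have hφ₁ := norm_eq_of_mem_sphere φ
  have hdist := dist_smul_smul_le hφ₁ θ t ‖y₀‖
  rw [hθ, abs_norm, abs_of_neg (sub_neg.2 ht.2), ← Subtype.dist_eq] at hdist
  have hcap : ‖y₀‖ * dist φ θ ≤ r / 2 := by
    rw [mem_closedBall, le_div_iff₀ (by positivity)] at hφ
    linarith
  have hnorm : ‖t • (φ : E)‖ = t := by
    rw [norm_smul, hφ₁, mul_one, Real.norm_of_nonneg (by linarith [ht.1])]
  exact ⟨mem_closedBall.2 (by linarith [ht.1]), hnorm.symm ▸ ht⟩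

variable [MeasurableSpace E] [BorelSpace E] [FiniteDimensional ℝ E]
  (μ : Measure E) [μ.IsAddHaarMeasure]

lemma addHaar_Ico_smul_image_sphere (A : Set (sphere (0 : E) 1)) {a : ℝ} (ha : 0 < a) (b : ℝ) :
    μ (Ico a b • (Subtype.val '' A)) =
      μ.toSphere A * Measure.volumeIoiPow (finrank ℝ E - 1) {r | (r : ℝ) ∈ Ico a b} := by
  set I : Set (Ioi (0 : ℝ)) := {r | (r : ℝ) ∈ Ico a b}
  have himage : Subtype.val '' I = Ico a b :=
    Subtype.coe_image_of_subset fun r hr ↦ ha.trans_le hr.1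
  have hsector : Subtype.val '' (homeomorphUnitSphereProd E ⁻¹' A ×ˢ I) =
      Ico a b • (Subtype.val '' A) := by
    rw [← image2_smul, image2_image_right, ← Homeomorph.image_symm, image_image, ← himage,
      image2_image_left, image2_swap, ← image_prod]
    rfl
  rw [← hsector, ← comap_subtype_coe_apply (measurableSet_singleton (0 : E)).compl,
    μ.measurePreserving_homeomorphUnitSphereProd.measure_preimage_emb
      (Homeomorph.measurableEmbedding _), Measure.prod_prod]

lemma addHaar_Ico_smul_image_sphere_mem_Icc (A : Set (sphere (0 : E) 1)) {a b : ℝ} (ha : 0 < a)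
    (hb : 0 ≤ b) :
    μ (Ico a b • (Subtype.val '' A)) ∈
      Icc (μ.toSphere A * ENNReal.ofReal ((b - a) * a ^ (finrank ℝ E - 1)))
        (μ.toSphere A * ENNReal.ofReal ((b - a) * b ^ (finrank ℝ E - 1))) := by
  rw [addHaar_Ico_smul_image_sphere μ A ha]
  have hI := volumeIoiPow_Ico_mem_Icc (finrank ℝ E - 1) ha hb
  exact ⟨mul_le_mul_right hI.1 _, mul_le_mul_right hI.2 _⟩

lemma toSphere_closedBall_le (θ : sphere (0 : E) 1) {r : ℝ} (hr : 0 < r) :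
    μ.toSphere (closedBall θ r) ≤
      2 ^ finrank ℝ E * μ (ball 0 1) * ENNReal.ofReal (r ^ (finrank ℝ E - 1)) := by
  have hsub : Ico 1 (1 + r) • (Subtype.val '' closedBall θ r) ⊆ closedBall (θ : E) (2 * r) := by
    rintro _ ⟨t, ht, _, ⟨φ, hφ, rfl⟩, rfl⟩
    have h := dist_smul_smul_le (norm_eq_of_mem_sphere φ) θ t 1
    rw [one_smul, abs_one, one_mul, abs_of_nonneg (sub_nonneg.2 ht.1)] at h
    rw [mem_closedBall, ← Subtype.dist_eq] at *
    linarith [ht.2]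
  have hsector := (addHaar_Ico_smul_image_sphere_mem_Icc μ (closedBall θ r) one_pos
    (by positivity : 0 ≤ 1 + r)).1.trans (measure_mono hsub)
  rw [add_sub_cancel_left, one_pow, mul_one, μ.addHaar_closedBall _ (by positivity)] at hsector
  refine (ENNReal.mul_le_mul_iff_left (ENNReal.ofReal_pos.2 hr).ne' ENNReal.ofReal_ne_top).1
    (hsector.trans_eq ?_)
  rw [mul_assoc (2 ^ _ * _), ← ENNReal.ofReal_mul (by positivity), ← pow_succ,
    finrank_sub_one_add_one_of_mem_sphere θ, mul_pow, ENNReal.ofReal_mul (by positivity),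
    ENNReal.ofReal_pow zero_le_two, ENNReal.ofReal_ofNat]
  ring

lemma ofReal_pow_mul_le_toSphere_closedBall (θ : sphere (0 : E) 1) {r : ℝ} (hr₀ : 0 < r)
    (hr : r ≤ 1) :
    ENNReal.ofReal (r ^ (finrank ℝ E - 1)) * μ (ball 0 1) ≤
      4 ^ finrank ℝ E * μ.toSphere (closedBall θ r) := by
  have hsector := (measure_mono (ball_subset_Ico_smul_image_closedBall θ hr)).trans
    (addHaar_Ico_smul_image_sphere_mem_Icc μ (closedBall θ r) (by linarith : 0 < 1 - r / 2)
      (by positivity : 0 ≤ 1 + r / 2)).2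
  have hradii : (1 + r / 2 - (1 - r / 2)) * (1 + r / 2) ^ (finrank ℝ E - 1) ≤
      r * 2 ^ finrank ℝ E := by
    rw [add_sub_sub_cancel, add_halves]
    gcongr ?_ * ?_
    exact (pow_le_pow_left₀ (by positivity) (by linarith) _).trans
      (pow_le_pow_right₀ one_le_two (Nat.sub_le _ 1))
  rw [μ.addHaar_ball_of_pos _ (by positivity)] at hsector
  refine (ENNReal.mul_le_mul_iff_left (ENNReal.ofReal_pos.2 hr₀).ne' ENNReal.ofReal_ne_top).1 ?_
  calc
    ENNReal.ofReal (r ^ (finrank ℝ E - 1)) * μ (ball 0 1) * ENNReal.ofReal r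
    _ = 2 ^ finrank ℝ E * (ENNReal.ofReal ((r / 2) ^ finrank ℝ E) * μ (ball 0 1)) := by
      rw [mul_right_comm, ← ENNReal.ofReal_mul (by positivity), ← pow_succ,
        finrank_sub_one_add_one_of_mem_sphere θ, ← ENNReal.ofReal_ofNat 2,
        ← ENNReal.ofReal_pow zero_le_two, ← mul_assoc, ← ENNReal.ofReal_mul (by positivity),
        ← mul_pow, mul_div_cancel₀ r two_ne_zero]
    _ ≤ 2 ^ finrank ℝ E * (μ.toSphere (closedBall θ r) *
        ENNReal.ofReal (r * 2 ^ finrank ℝ E)) := by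
      grw [hsector, hradii]
    _ = 4 ^ finrank ℝ E * μ.toSphere (closedBall θ r) * ENNReal.ofReal r := by
      rw [ENNReal.ofReal_mul hr₀.le, ENNReal.ofReal_pow zero_le_two, ENNReal.ofReal_ofNat,
        show (4 : ℝ≥0∞) = 2 * 2 by norm_num, mul_pow]
      ring

lemma ofReal_mul_le_addHaar_shell_inter_closedBall {y₀ : E} {r ε : ℝ} (hε₀ : 0 < ε)
    (hε : ε ≤ r / 2) (hr : r ≤ ‖y₀‖) :
    ENNReal.ofReal (ε * r ^ (finrank ℝ E - 1)) * μ (ball 0 1) ≤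
      16 ^ finrank ℝ E * μ {y ∈ closedBall y₀ r | ‖y‖ ∈ Ico (‖y₀‖ - ε) ‖y₀‖} := by
  have hr₀ : 0 < r := by linarith
  have hy₀ : 0 < ‖y₀‖ := by linarith
  let θ : sphere (0 : E) 1 := ⟨‖y₀‖⁻¹ • y₀, inv_norm_smul_mem_sphere (norm_pos_iff.1 hy₀)⟩
  set k := finrank ℝ E - 1
  have hcap := ofReal_pow_mul_le_toSphere_closedBall μ θ (r := r / (2 * ‖y₀‖)) (by positivity)
    ((div_le_one (by positivity)).2 (by linarith))
  have hsector := (addHaar_Ico_smul_image_sphere_mem_Icc μ (closedBall θ (r / (2 * ‖y₀‖)))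
    (by linarith : 0 < ‖y₀‖ - ε) hy₀.le).1.trans (measure_mono
      (Ico_smul_image_closedBall_subset θ (smul_inv_smul₀ hy₀.ne' y₀) hε hr₀ hr))
  have hradii : ε * r ^ k ≤
      4 ^ finrank ℝ E * ((r / (2 * ‖y₀‖)) ^ k * ((‖y₀‖ - (‖y₀‖ - ε)) * (‖y₀‖ - ε) ^ k)) := calc
    ε * r ^ k = 4 ^ k * ((r / (2 * ‖y₀‖)) ^ k * (ε * (‖y₀‖ / 2) ^ k)) := by
      rw [mul_left_comm _ ε, mul_left_comm _ ε, ← mul_pow, ← mul_pow]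
      field_simp
      norm_num
    _ ≤ _ := by
      rw [sub_sub_cancel]
      gcongr
      · norm_num
      · exact Nat.sub_le _ 1
      · linarith
  calc
    ENNReal.ofReal (ε * r ^ k) * μ (ball 0 1)
    _ ≤ 4 ^ finrank ℝ E * (ENNReal.ofReal ((r / (2 * ‖y₀‖)) ^ k) * μ (ball 0 1) *
        ENNReal.ofReal ((‖y₀‖ - (‖y₀‖ - ε)) * (‖y₀‖ - ε) ^ k)) := by
      grw [hradii]
      rw [ENNReal.ofReal_mul (by positivity), ENNReal.ofReal_mul (by positivity),
        ENNReal.ofReal_pow (by norm_num), ENNReal.ofReal_ofNat]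
      exact le_of_eq (by ring)
    _ ≤ 4 ^ finrank ℝ E * (4 ^ finrank ℝ E * μ.toSphere (closedBall θ (r / (2 * ‖y₀‖))) *
        ENNReal.ofReal ((‖y₀‖ - (‖y₀‖ - ε)) * (‖y₀‖ - ε) ^ k)) := by gcongr
    _ ≤ 16 ^ finrank ℝ E * μ {y ∈ closedBall y₀ r | ‖y‖ ∈ Ico (‖y₀‖ - ε) ‖y₀‖} := by
      rw [mul_assoc (4 ^ _), ← mul_assoc, ← mul_pow, show (4 : ℝ≥0∞) * 4 = 16 by norm_num]
      gcongr

theorem exists_toSphere_le_smul_hausdorffMeasure :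
    ∃ C : ℝ≥0, μ.toSphere ≤ C • μH[(finrank ℝ E : ℝ) - 1] := by
  cases subsingleton_or_nontrivial E
  · exact ⟨0, by simp [μ.toSphere_eq_zero_iff.2 ‹_›]⟩
  have hC₀ : 2 ^ finrank ℝ E * μ (ball 0 1) ≠ 0 :=
    mul_ne_zero (by simp) (measure_ball_pos μ 0 one_pos).ne'
  have hC : 2 ^ finrank ℝ E * μ (ball 0 1) ≠ ∞ :=
    ENNReal.mul_ne_top (by simp) measure_ball_lt_top.ne
  refine ⟨(2 ^ finrank ℝ E * μ (ball 0 1)).toNNReal, ?_⟩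
  have hle : (2 ^ finrank ℝ E * μ (ball 0 1))⁻¹ • μ.toSphere ≤ μH[(finrank ℝ E : ℝ) - 1] :=
    le_hausdorffMeasure_of_closedBall_le fun θ r hr ↦ by
      rw [Measure.smul_apply, smul_eq_mul, ENNReal.inv_mul_le_iff hC₀ hC,
        ← Nat.cast_pred finrank_pos, ENNReal.rpow_natCast, ← ENNReal.ofReal_pow hr.le]
      exact toSphere_closedBall_le μ θ hr
  refine Measure.le_iff'.2 fun A ↦ ?_
  have hA := hle A
  rwa [Measure.smul_apply, smul_eq_mul, ENNReal.inv_mul_le_iff hC₀ hC,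
    ← ENNReal.coe_toNNReal hC] at hA

end PolarCoordinates

section Weight

lemma abs_rpow_sub_rpow_le_mul_abs_sub {a s t : ℝ} (ha : 1 ≤ a) (hs : s ∈ Icc (0 : ℝ) 1)
    (ht : t ∈ Icc (0 : ℝ) 1) : |t ^ a - s ^ a| ≤ a * |t - s| := by
  refine (convex_Icc (0 : ℝ) 1).norm_image_sub_le_of_norm_hasDerivWithin_le
    (fun u _ ↦ (Real.hasDerivAt_rpow_const (Or.inr ha)).hasDerivWithinAt) (fun u hu ↦ ?_) hs ht
  rw [Real.norm_of_nonneg (mul_nonneg (by linarith) (Real.rpow_nonneg hu.1 _))]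
  exact mul_le_of_le_one_right (by linarith) (Real.rpow_le_one hu.1 hu.2 (by linarith))

lemma rpow_sub_one_mul_abs_sub_le_abs_rpow_sub_rpow {a s t : ℝ} (ha : 1 ≤ a) (hs : 0 ≤ s)
    (ht : 0 ≤ t) : s ^ (a - 1) * |t - s| ≤ |t ^ a - s ^ a| := by
  have hfactor {u : ℝ} (hu : 0 ≤ u) : u ^ a = u ^ (a - 1) * u := by
    rw [← Real.rpow_add_one' hu (by linarith), sub_add_cancel]
  rw [hfactor hs, hfactor ht]
  obtain hst | hts := le_total s t
  · have hmono : s ^ (a - 1) * t ≤ t ^ (a - 1) * t := by gcongr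
    rw [abs_of_nonneg (sub_nonneg.2 hst)]
    exact le_abs.2 (Or.inl (by linarith))
  · have hmono : t ^ (a - 1) * t ≤ s ^ (a - 1) * t := by gcongr
    rw [abs_of_nonpos (sub_nonpos.2 hts)]
    exact le_abs.2 (Or.inr (by linarith))

variable {n : ℕ} {a₁ a₂ : ℝ}

lemma measurable_omegaW (a₁ a₂ : ℝ) : Measurable (omegaW a₁ a₂ : Rn n → ℝ) := by
  unfold omegaW
  fun_prop

lemma omegaW_pos (ha₁ : 0 < a₁) {y : Rn n} (hy : ‖y‖ < 1) : 0 < omegaW a₁ a₂ y :=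
  Real.rpow_pos_of_pos (sub_pos.2 (Real.rpow_lt_one (norm_nonneg y) hy ha₁)) _

lemma omegaW_rpow (ha₁ : 0 ≤ a₁) (ha₂ : a₂ ≠ 0) {y : Rn n} (hy : ‖y‖ ≤ 1) :
    omegaW a₁ a₂ y ^ a₂ = 1 - ‖y‖ ^ a₁ := by
  rw [omegaW, one_div,
    Real.rpow_inv_rpow (sub_nonneg.2 (Real.rpow_le_one (norm_nonneg y) hy ha₁)) ha₂]

lemma norm_fst_le_one_of_mem_S2 (ha₁ : 0 < a₁) {p : Rn n × Rn n} (hp : p ∈ S2 n a₁ a₂) :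
    ‖p.1‖ ≤ 1 := by
  have h₂ := Real.rpow_nonneg (norm_nonneg p.2) a₂
  refine (Real.rpow_le_rpow_iff (norm_nonneg _) zero_le_one ha₁).1 ?_
  rw [Real.one_rpow]
  linarith [hp.out]

lemma norm_snd_le_one_of_mem_S2 (ha₂ : 0 < a₂) {p : Rn n × Rn n} (hp : p ∈ S2 n a₁ a₂) :
    ‖p.2‖ ≤ 1 :=
  norm_fst_le_one_of_mem_S2 (p := p.swap) (a₂ := a₁) ha₂ ((add_comm _ _).trans hp)

lemma pow_mul_abs_omegaW_sub_norm_le (ha₁ : 1 ≤ a₁) (ha₂ : 1 ≤ a₂) (ha₂n : a₂ ≤ n)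
    {p : Rn n × Rn n} (hp : p ∈ S2 n a₁ a₂) {y : Rn n} (hy : ‖y‖ ≤ 1) :
    ‖p.2‖ ^ (n - 1) * |omegaW a₁ a₂ y - ‖p.2‖| ≤ a₁ * |‖y‖ - ‖p.1‖| := by
  have hn : 1 ≤ n := Nat.one_le_cast.1 (ha₂.trans ha₂n)
  have hω : 0 ≤ omegaW a₁ a₂ y :=
    Real.rpow_nonneg (sub_nonneg.2 (Real.rpow_le_one (norm_nonneg y) hy (by linarith))) _
  calc
    ‖p.2‖ ^ (n - 1) * |omegaW a₁ a₂ y - ‖p.2‖|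
    _ ≤ ‖p.2‖ ^ (a₂ - 1) * |omegaW a₁ a₂ y - ‖p.2‖| := by
      rw [← Real.rpow_natCast, Nat.cast_pred hn]
      gcongr ?_ * _
      exact Real.rpow_le_rpow_of_exponent_ge' (norm_nonneg _)
        (norm_snd_le_one_of_mem_S2 (by linarith) hp) (by linarith) (by linarith)
    _ ≤ |omegaW a₁ a₂ y ^ a₂ - ‖p.2‖ ^ a₂| :=
      rpow_sub_one_mul_abs_sub_le_abs_rpow_sub_rpow ha₂ (norm_nonneg _) hω
    _ = |‖y‖ ^ a₁ - ‖p.1‖ ^ a₁| := by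
      rw [omegaW_rpow (by linarith) (by linarith) hy, eq_sub_of_add_eq' hp.out,
        sub_sub_sub_cancel_left, abs_sub_comm]
    _ ≤ a₁ * |‖y‖ - ‖p.1‖| :=
      abs_rpow_sub_rpow_le_mul_abs_sub ha₁
        ⟨norm_nonneg _, norm_fst_le_one_of_mem_S2 (by linarith) hp⟩ ⟨norm_nonneg y, hy⟩

end Weight

section SurfaceMeasure

open Filter Module
open scoped Topology

variable {n : ℕ} {a₁ a₂ : ℝ}

/-- The parametrization `(y, φ) ↦ (y, ω_𝐚(y) φ)` of `S₂^𝐚` by the unit ball times the unit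
sphere: the graph of the weight in polar coordinates for the second variable. -/
def polarGraph (n : ℕ) (a₁ a₂ : ℝ) (q : Rn n × sphere (0 : Rn n) 1) : Rn n × Rn n :=
  (q.1, omegaW a₁ a₂ q.1 • (q.2 : Rn n))

lemma measurable_polarGraph : Measurable (polarGraph n a₁ a₂) :=
  measurable_fst.prodMk (((measurable_omegaW a₁ a₂).comp measurable_fst).smul
    (measurable_subtype_coe.comp measurable_snd))

/-- The image of Lebesgue measure on the unit ball times surface measure on the unit sphere under
`polarGraph`. It lives on `S₂^𝐚` and serves as a majorant of the surface measure `μS2`. -/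
def polarGraphMeasure (n : ℕ) (a₁ a₂ : ℝ) : Measure (Rn n × Rn n) :=
  ((volume.restrict (ball (0 : Rn n) 1)).prod (volume : Measure (Rn n)).toSphere).map
    (polarGraph n a₁ a₂)

instance : IsFiniteMeasure (polarGraphMeasure n a₁ a₂) := by
  have : IsFiniteMeasure (volume.restrict (ball (0 : Rn n) 1)) :=
    isFiniteMeasure_restrict.2 measure_ball_lt_top.ne
  unfold polarGraphMeasure
  infer_instance

lemma shell_prod_cap_subset_preimage_closedBall (ha₁ : 1 ≤ a₁) (ha₂ : 1 ≤ a₂) (ha₂n : a₂ ≤ n)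
    {p : Rn n × Rn n} (hp : p ∈ S2 n a₁ a₂) (hp₂ : p.2 ≠ 0) {θ : sphere (0 : Rn n) 1}
    (hθ : ‖p.2‖ • (θ : Rn n) = p.2) (r : ℝ) :
    {y ∈ closedBall p.1 r | ‖y‖ ∈ Ico (‖p.1‖ - ‖p.2‖ ^ (n - 1) * r / (2 * a₁)) ‖p.1‖} ×ˢ
      closedBall θ (r / (2 * ‖p.2‖)) ⊆ polarGraph n a₁ a₂ ⁻¹' closedBall p r := by
  rintro ⟨y, φ⟩ ⟨⟨hy, hylow, hyupp⟩, hφ⟩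
  have hρ : 0 < ‖p.2‖ := norm_pos_iff.2 hp₂
  have hyone : ‖y‖ ≤ 1 := hyupp.le.trans (norm_fst_le_one_of_mem_S2 (by linarith) hp)
  have hweight : |omegaW a₁ a₂ y - ‖p.2‖| ≤ r / 2 := by
    refine le_of_mul_le_mul_left ?_ (pow_pos hρ (n - 1))
    calc
      _ ≤ a₁ * |‖y‖ - ‖p.1‖| := pow_mul_abs_omegaW_sub_norm_le ha₁ ha₂ ha₂n hp hyone
      _ ≤ a₁ * (‖p.2‖ ^ (n - 1) * r / (2 * a₁)) := by
        rw [abs_of_neg (sub_neg.2 hyupp)]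
        gcongr
        linarith
      _ = ‖p.2‖ ^ (n - 1) * (r / 2) := by field_simp
  have hcap : ‖p.2‖ * dist φ θ ≤ r / 2 := by
    rw [mem_closedBall, le_div_iff₀ (by positivity)] at hφ
    linarith
  have hdist := dist_smul_smul_le (norm_eq_of_mem_sphere φ) θ (omegaW a₁ a₂ y) ‖p.2‖
  rw [hθ, abs_norm, ← Subtype.dist_eq] at hdist
  rw [mem_preimage, mem_closedBall, Prod.dist_eq]
  exact max_le hy (hdist.trans (by linarith))

lemma volume_shell_mul_toSphere_cap_le (ha₁ : 1 ≤ a₁) (ha₂ : 1 ≤ a₂) (ha₂n : a₂ ≤ n)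
    {p : Rn n × Rn n} (hp : p ∈ S2 n a₁ a₂) (hp₂ : p.2 ≠ 0) {θ : sphere (0 : Rn n) 1}
    (hθ : ‖p.2‖ • (θ : Rn n) = p.2) (r : ℝ) :
    volume {y ∈ closedBall p.1 r | ‖y‖ ∈ Ico (‖p.1‖ - ‖p.2‖ ^ (n - 1) * r / (2 * a₁)) ‖p.1‖} *
        volume.toSphere (closedBall θ (r / (2 * ‖p.2‖))) ≤
      polarGraphMeasure n a₁ a₂ (closedBall p r) := by
  have hsubset : {y ∈ closedBall p.1 r |
      ‖y‖ ∈ Ico (‖p.1‖ - ‖p.2‖ ^ (n - 1) * r / (2 * a₁)) ‖p.1‖} ⊆ ball 0 1 := fun y hy ↦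
    mem_ball_zero_iff.2 (hy.2.2.trans_le (norm_fst_le_one_of_mem_S2 (by linarith) hp))
  rw [polarGraphMeasure, Measure.map_apply measurable_polarGraph isClosed_closedBall.measurableSet,
    ← Measure.restrict_eq_self volume hsubset, ← Measure.prod_prod]
  exact measure_mono (shell_prod_cap_subset_preimage_closedBall ha₁ ha₂ ha₂n hp hp₂ hθ r)

lemma ofReal_pow_mul_le_polarGraphMeasure_closedBall (ha₁ : 1 ≤ a₁) (ha₂ : 1 ≤ a₂) (ha₂n : a₂ ≤ n)
    {p : Rn n × Rn n} (hp : p ∈ S2 n a₁ a₂) (hp₂ : p.2 ≠ 0) {r : ℝ} (hr₀ : 0 < r)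
    (hr₁ : r ≤ ‖p.1‖) (hr₂ : r ≤ 2 * ‖p.2‖) :
    ENNReal.ofReal (r ^ (2 * n - 1)) * volume (ball (0 : Rn n) 1) ^ 2 ≤
      128 ^ n * ENNReal.ofReal a₁ * polarGraphMeasure n a₁ a₂ (closedBall p r) := by
  have hρ : 0 < ‖p.2‖ := norm_pos_iff.2 hp₂
  let θ : sphere (0 : Rn n) 1 := ⟨‖p.2‖⁻¹ • p.2, inv_norm_smul_mem_sphere hp₂⟩
  have hprod := volume_shell_mul_toSphere_cap_le ha₁ ha₂ ha₂n hp hp₂ (θ := θ)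
    (smul_inv_smul₀ hρ.ne' p.2) r
  set ε := ‖p.2‖ ^ (n - 1) * r / (2 * a₁) with hε
  set shell := {y ∈ closedBall p.1 r | ‖y‖ ∈ Ico (‖p.1‖ - ε) ‖p.1‖}
  set cap := closedBall θ (r / (2 * ‖p.2‖))
  set V := volume (ball (0 : Rn n) 1)
  have hεr : ε ≤ r / 2 := by
    have hpow : ‖p.2‖ ^ (n - 1) ≤ 1 :=
      pow_le_one₀ hρ.le (norm_snd_le_one_of_mem_S2 (by linarith) hp)
    rw [hε, div_le_div_iff₀ (by positivity) two_pos]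
    nlinarith [mul_le_mul hpow ha₁ zero_le_one zero_le_one]
  have hshell := ofReal_mul_le_addHaar_shell_inter_closedBall volume (y₀ := p.1)
    (by positivity : 0 < ε) hεr hr₁
  have hcap := ofReal_pow_mul_le_toSphere_closedBall volume θ (r := r / (2 * ‖p.2‖))
    (by positivity) ((div_le_one (by positivity)).2 hr₂)
  rw [finrank_euclideanSpace_fin] at hshell hcap
  have hradii : r ^ (2 * n - 1) =
      2 ^ n * a₁ * (ε * r ^ (n - 1)) * (r / (2 * ‖p.2‖)) ^ (n - 1) := by
    obtain ⟨m, rfl⟩ := Nat.exists_eq_add_of_le' (Nat.one_le_cast.1 (ha₂.trans ha₂n))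
    rw [hε, show 2 * (m + 1) - 1 = 2 * m + 1 by lia, Nat.add_sub_cancel, div_pow, mul_pow]
    field_simp
    ring
  calc
    _ = 2 ^ n * ENNReal.ofReal a₁ * (ENNReal.ofReal (ε * r ^ (n - 1)) * V) *
        (ENNReal.ofReal ((r / (2 * ‖p.2‖)) ^ (n - 1)) * V) := by
      rw [hradii, ENNReal.ofReal_mul (by positivity), ENNReal.ofReal_mul (by positivity),
        ENNReal.ofReal_mul (by positivity), ENNReal.ofReal_pow zero_le_two, ENNReal.ofReal_ofNat]
      ring
    _ ≤ 2 ^ n * ENNReal.ofReal a₁ * (16 ^ n * volume shell) * (4 ^ n * volume.toSphere cap) := by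
      gcongr
    _ = 128 ^ n * ENNReal.ofReal a₁ * (volume shell * volume.toSphere cap) := by
      rw [show (128 : ℝ≥0∞) = 2 * 16 * 4 by norm_num, mul_pow, mul_pow]
      ring
    _ ≤ _ := by gcongr

lemma exists_eventually_rpow_le_smul_polarGraphMeasure_closedBall (ha₁ : 1 ≤ a₁) (ha₂ : 1 ≤ a₂)
    (ha₂n : a₂ ≤ n) :
    ∃ C : ℝ≥0, ∀ p ∈ S2 n a₁ a₂, p.1 ≠ 0 → p.2 ≠ 0 → ∀ᶠ r in 𝓝[>] (0 : ℝ),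
      ENNReal.ofReal r ^ (2 * (n : ℝ) - 1) ≤
        (C • polarGraphMeasure n a₁ a₂) (closedBall p r) := by
  have hn : 1 ≤ n := Nat.one_le_cast.1 (ha₂.trans ha₂n)
  set V := volume (ball (0 : Rn n) 1)
  have hV : V ^ 2 ≠ 0 := pow_ne_zero 2 (measure_ball_pos _ _ one_pos).ne'
  have hV' : V ^ 2 ≠ ⊤ := ENNReal.pow_ne_top measure_ball_lt_top.ne
  refine ⟨(128 ^ n * ENNReal.ofReal a₁ / V ^ 2).toNNReal, fun p hp hp₁ hp₂ ↦ ?_⟩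
  have hpos : 0 < min ‖p.1‖ (2 * ‖p.2‖) :=
    lt_min (norm_pos_iff.2 hp₁) (mul_pos two_pos (norm_pos_iff.2 hp₂))
  filter_upwards [Ioo_mem_nhdsGT hpos] with r ⟨hr₀, hr⟩
  have hdensity := ofReal_pow_mul_le_polarGraphMeasure_closedBall ha₁ ha₂ ha₂n hp hp₂ hr₀
    (hr.le.trans (min_le_left _ _)) (hr.le.trans (min_le_right _ _))
  have hexp : ((2 * n - 1 : ℕ) : ℝ) = 2 * (n : ℝ) - 1 := by
    rw [Nat.cast_pred (by lia)]
    push_cast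
    rfl
  rw [← hexp, ENNReal.rpow_natCast, ← ENNReal.ofReal_pow hr₀.le, Measure.smul_apply,
    ENNReal.smul_def, ENNReal.coe_toNNReal (by finiteness), smul_eq_mul,
    ENNReal.mul_comm_div, ← mul_div_assoc, ENNReal.le_div_iff_mul_le (.inl hV) (.inl hV')]
  exact hdensity

lemma hausdorffMeasure_range_eq_zero_of_finrank_lt {F X : Type*} [NormedAddCommGroup F]
    [NormedSpace ℝ F] [FiniteDimensional ℝ F] [EMetricSpace X] [MeasurableSpace X] [BorelSpace X]
    {K : ℝ≥0} {f : F → X} (hf : LipschitzWith K f) {d : ℝ} (hd : finrank ℝ F < d) :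
    μH[d] (range f) = 0 := by
  borelize F
  have h := hf.hausdorffMeasure_image_le ((Nat.cast_nonneg _).trans hd.le) univ
  rwa [Real.hausdorffMeasure_of_finrank_lt hd, Measure.coe_zero, Pi.zero_apply, mul_zero,
    nonpos_iff_eq_zero, image_univ] at h

lemma hausdorffMeasure_fst_eq_zero_or_snd_eq_zero (hn : 2 ≤ n) :
    μH[2 * (n : ℝ) - 1] {p : Rn n × Rn n | p.1 = 0 ∨ p.2 = 0} = 0 := by
  have hn' : (2 : ℝ) ≤ n := mod_cast hn
  have hdim : (finrank ℝ (Rn n) : ℝ) < 2 * (n : ℝ) - 1 := by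
    rw [finrank_euclideanSpace_fin]
    linarith
  refine measure_mono_null ?_ (measure_union_null
    (hausdorffMeasure_range_eq_zero_of_finrank_lt (LipschitzWith.prodMk_left (0 : Rn n)) hdim)
    (hausdorffMeasure_range_eq_zero_of_finrank_lt (LipschitzWith.prodMk_right (0 : Rn n)) hdim))
  rintro ⟨y, z⟩ (rfl | rfl)
  exacts [.inl ⟨z, rfl⟩, .inr ⟨y, rfl⟩]

lemma exists_hausdorffMeasure_restrict_S2_le (hn : 2 ≤ n) (ha₁ : 1 ≤ a₁) (ha₂ : 1 ≤ a₂)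
    (ha₂n : a₂ ≤ n) :
    ∃ C : ℝ≥0, μH[2 * (n : ℝ) - 1].restrict (S2 n a₁ a₂) ≤ C • polarGraphMeasure n a₁ a₂ := by
  obtain ⟨C, hC⟩ := exists_eventually_rpow_le_smul_polarGraphMeasure_closedBall ha₁ ha₂ ha₂n
  have hn' : (2 : ℝ) ≤ n := mod_cast hn
  set axes := {p : Rn n × Rn n | p.1 = 0 ∨ p.2 = 0}
  refine ⟨10 ^ (2 * (n : ℝ) - 1) * C, Measure.le_iff.2 fun A hA ↦ ?_⟩
  calc
    _ = μH[2 * (n : ℝ) - 1] ((A ∩ S2 n a₁ a₂) \ axes) := by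
      rw [Measure.restrict_apply hA,
        measure_sdiff_null (hausdorffMeasure_fst_eq_zero_or_snd_eq_zero hn)]
    _ ≤ 10 ^ (2 * (n : ℝ) - 1) * (C • polarGraphMeasure n a₁ a₂) ((A ∩ S2 n a₁ a₂) \ axes) := by
      refine hausdorffMeasure_le_of_frequently_rpow_le (by linarith) fun p hp ↦ ?_
      obtain ⟨hp₁, hp₂⟩ := not_or.1 hp.2
      exact (hC p hp.1.2 hp₁ hp₂).frequently
    _ ≤ 10 ^ (2 * (n : ℝ) - 1) * (C • polarGraphMeasure n a₁ a₂) A := by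
      gcongr
      exact sdiff_subset.trans inter_subset_left
    _ = _ := by
      rw [mul_smul, Measure.smul_apply _ (C • _), ENNReal.smul_def (_ ^ _), smul_eq_mul,
        ENNReal.coe_rpow_of_ne_zero (by norm_num), ENNReal.coe_ofNat]

theorem exists_μS2_le_smul_polarGraphMeasure (hn : 2 ≤ n) (ha₁ : 1 ≤ a₁) (ha₂ : 1 ≤ a₂)
    (ha₂n : a₂ ≤ n) : ∃ C : ℝ≥0, μS2 n a₁ a₂ ≤ C • polarGraphMeasure n a₁ a₂ := by
  obtain ⟨C, hC⟩ := exists_hausdorffMeasure_restrict_S2_le hn ha₁ ha₂ ha₂n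
  by_cases hnull : μH[2 * (n : ℝ) - 1] (S2 n a₁ a₂) = 0
  · exact ⟨0, by simp [μS2, Measure.restrict_eq_zero.2 hnull]⟩
  · refine ⟨(μH[2 * (n : ℝ) - 1] (S2 n a₁ a₂))⁻¹.toNNReal * C, ?_⟩
    calc
      μS2 n a₁ a₂ ≤ (μH[2 * (n : ℝ) - 1] (S2 n a₁ a₂))⁻¹ • C • polarGraphMeasure n a₁ a₂ := by
        unfold μS2
        gcongr
      _ = _ := by
        rw [mul_smul, ← ENNReal.coe_toNNReal (ENNReal.inv_ne_top.2 hnull)]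
        rfl

end SurfaceMeasure

section Averages

open Module

variable {n : ℕ} {a₁ a₂ : ℝ}

lemma sphAvgE_le_sphMax (g : Rn n → ℝ) (x : Rn n) {t : ℝ} (ht : 0 < t) :
    sphAvgE n g x t ≤ sphMax n g x :=
  le_iSup₂ (f := fun t (_ : t ∈ Ioi (0 : ℝ)) ↦ sphAvgE n g x t) t ht

section AddHaar

variable {E : Type*} [NormedAddCommGroup E] [NormedSpace ℝ E] [MeasurableSpace E] [BorelSpace E]

lemma measurableEmbedding_sub_smul (x : E) {t : ℝ} (ht : t ≠ 0) :
    MeasurableEmbedding fun y : E ↦ x - t • y :=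
  ((Homeomorph.smulOfNeZero t ht).trans (Homeomorph.subLeft x)).measurableEmbedding

variable [FiniteDimensional ℝ E] (μ : Measure E) [μ.IsAddHaarMeasure]

lemma map_sub_smul_addHaar (x : E) {t : ℝ} (ht : t ≠ 0) :
    μ.map (fun y ↦ x - t • y) = ENNReal.ofReal |(t ^ finrank ℝ E)⁻¹| • μ := by
  change μ.map ((fun y ↦ x - y) ∘ fun y ↦ t • y) = _
  rw [← Measure.map_map (by fun_prop) (by fun_prop), Measure.map_addHaar_smul μ ht,
    Measure.map_smul, (Measure.measurePreserving_sub_left μ x).map_eq]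

lemma map_sub_smul_restrict_ball (x : E) {t : ℝ} (ht : 0 < t) :
    (μ.restrict (ball 0 1)).map (fun y ↦ x - t • y) =
      (μ (ball 0 1) / μ (ball x t)) • μ.restrict (ball x t) := by
  have hpre : (fun y : E ↦ x - t • y) ⁻¹' ball x t = ball 0 1 := by
    ext y
    rw [mem_preimage, mem_ball_zero_iff, mem_ball_iff_norm, sub_sub_cancel_left, norm_neg,
      norm_smul, Real.norm_of_nonneg ht.le, mul_lt_iff_lt_one_right ht]
  have hratio : ENNReal.ofReal |(t ^ finrank ℝ E)⁻¹| = μ (ball 0 1) / μ (ball x t) := by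
    rw [μ.addHaar_ball_of_pos x ht, abs_of_pos (by positivity),
      ENNReal.ofReal_inv_of_pos (by positivity), ← one_div]
    conv_lhs => rw [← ENNReal.mul_div_mul_right _ _ (measure_ball_pos μ 0 one_pos).ne'
      measure_ball_lt_top.ne, one_mul]
  rw [← hratio, ← Measure.restrict_smul, ← map_sub_smul_addHaar μ x ht.ne',
    (measurableEmbedding_sub_smul x ht.ne').restrict_map, hpre]

end AddHaar

lemma setLIntegral_ball_le_mul_HLMax (f : Rn n → ℝ) (x : Rn n) {t : ℝ} (ht : 0 < t) :
    ∫⁻ y in ball (0 : Rn n) 1, ENNReal.ofReal (f (x - t • y)) ≤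
      volume (ball (0 : Rn n) 1) * HLMax n f x := by
  calc
    _ = volume (ball (0 : Rn n) 1) *
        ((∫⁻ y in ball x t, ENNReal.ofReal (f y)) / volume (ball x t)) := by
      rw [← (measurableEmbedding_sub_smul x ht.ne').lintegral_map fun y ↦ ENNReal.ofReal (f y),
        map_sub_smul_restrict_ball volume x ht, lintegral_smul_measure, smul_eq_mul,
        ENNReal.mul_comm_div]
    _ ≤ volume (ball (0 : Rn n) 1) *
        ((∫⁻ y in ball x t, ENNReal.ofReal |f y|) / volume (ball x t)) := by
      gcongr
      exact le_abs_self _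
    _ ≤ _ := by
      gcongr
      exact le_iSup₂ (f := fun r (_ : r ∈ Ioi (0 : ℝ)) ↦
        (∫⁻ y in ball x r, ENNReal.ofReal |f y|) / volume (ball x r)) t ht

lemma exists_lintegral_toSphere_le_mul_sphMax (hn : 1 ≤ n) :
    ∃ C : ℝ≥0, ∀ g : Rn n → ℝ, Measurable g → ∀ (x : Rn n) (t : ℝ), 0 < t →
      ∫⁻ φ : sphere (0 : Rn n) 1, ENNReal.ofReal (g (x - t • (φ : Rn n)))
        ∂(volume : Measure (Rn n)).toSphere ≤ C * sphMax n g x := by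
  obtain ⟨C, hC⟩ := exists_toSphere_le_smul_hausdorffMeasure (volume : Measure (Rn n))
  rw [finrank_euclideanSpace_fin] at hC
  have hsph : (μH[(n : ℝ) - 1] : Measure (sphere (0 : Rn n) 1)).map (↑) = μSph n := by
    rw [isometry_subtype_coe.map_hausdorffMeasure
      (.inl (sub_nonneg.2 (Nat.one_le_cast.2 hn))), Subtype.range_coe, μSph]
  refine ⟨C, fun g hg x t ht ↦ ?_⟩
  calc
    _ ≤ C * ∫⁻ φ : sphere (0 : Rn n) 1, ENNReal.ofReal (g (x - t • (φ : Rn n)))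
        ∂μH[(n : ℝ) - 1] := by
      grw [hC]
      exact (lintegral_smul_measure ..).le
    _ = C * sphAvgE n g x t := by
      rw [sphAvgE, ← hsph, lintegral_map (by fun_prop) measurable_subtype_coe]
    _ ≤ C * sphMax n g x := by grw [sphAvgE_le_sphMax g x ht]

lemma exists_lintegral_polarGraphMeasure_le (hn : 1 ≤ n) (ha₁ : 0 < a₁) :
    ∃ C : ℝ≥0, ∀ f g : Rn n → ℝ, Measurable f → Measurable g → ∀ (x : Rn n) (t₁ t₂ : ℝ),
      0 < t₁ → 0 < t₂ →
      ∫⁻ p, ENNReal.ofReal (f (x - t₁ • p.1)) * ENNReal.ofReal (g (x - t₂ • p.2))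
        ∂polarGraphMeasure n a₁ a₂ ≤ C * HLMax n f x * sphMax n g x := by
  obtain ⟨C, hC⟩ := exists_lintegral_toSphere_le_mul_sphMax hn
  set V := volume (ball (0 : Rn n) 1)
  refine ⟨V.toNNReal * C, fun f g hf hg x t₁ t₂ ht₁ ht₂ ↦ ?_⟩
  have hω := measurable_omegaW (n := n) a₁ a₂
  calc
    _ = ∫⁻ y in ball (0 : Rn n) 1, ENNReal.ofReal (f (x - t₁ • y)) *
        ∫⁻ φ : sphere (0 : Rn n) 1, ENNReal.ofReal (g (x - (t₂ * omegaW a₁ a₂ y) • (φ : Rn n)))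
          ∂(volume : Measure (Rn n)).toSphere := by
      rw [polarGraphMeasure, lintegral_map (by fun_prop) measurable_polarGraph,
        lintegral_prod _ (by unfold polarGraph; fun_prop)]
      simp only [polarGraph, smul_smul]
      exact lintegral_congr fun y ↦ lintegral_const_mul _ (by fun_prop)
    _ ≤ ∫⁻ y in ball (0 : Rn n) 1, ENNReal.ofReal (f (x - t₁ • y)) * (C * sphMax n g x) := by
      refine setLIntegral_mono' measurableSet_ball fun y hy ↦ ?_
      gcongr
      exact hC g hg x _ (mul_pos ht₂ (omegaW_pos ha₁ (mem_ball_zero_iff.1 hy)))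
    _ ≤ V * HLMax n f x * (C * sphMax n g x) := by
      rw [lintegral_mul_const _ (by fun_prop)]
      grw [setLIntegral_ball_le_mul_HLMax f x ht₁]
    _ = _ := by
      rw [ENNReal.coe_mul, ENNReal.coe_toNNReal measure_ball_lt_top.ne]
      ring

theorem exists_biMaxE_le_mul_HLMax_mul_sphMax (hn : 2 ≤ n) (ha₁ : 1 ≤ a₁) (ha₂ : 1 ≤ a₂)
    (ha₂n : a₂ ≤ n) :
    ∃ C : ℝ≥0, ∀ f g : Rn n → ℝ, Measurable f → Measurable g → ∀ x : Rn n,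
      biMaxE n a₁ a₂ f g x ≤ C * HLMax n f x * sphMax n g x := by
  obtain ⟨C, hC⟩ := exists_μS2_le_smul_polarGraphMeasure hn ha₁ ha₂ ha₂n
  obtain ⟨C', hC'⟩ := exists_lintegral_polarGraphMeasure_le (n := n) (a₁ := a₁) (a₂ := a₂)
    (by lia) (by linarith)
  refine ⟨C * C', fun f g hf hg x ↦ iSup₂_le fun t₁ ht₁ ↦ iSup₂_le fun t₂ ht₂ ↦ ?_⟩
  calc
    biAvgE n a₁ a₂ f g t₁ t₂ x
      ≤ C * ∫⁻ p, ENNReal.ofReal (f (x - t₁ • p.1)) * ENNReal.ofReal (g (x - t₂ • p.2))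
          ∂polarGraphMeasure n a₁ a₂ := by
      rw [biAvgE]
      grw [hC]
      exact (lintegral_smul_measure ..).le
    _ ≤ C * (C' * HLMax n f x * sphMax n g x) := by grw [hC' f g hf hg x t₁ t₂ ht₁ ht₂]
    _ = _ := by
      rw [ENNReal.coe_mul]
      ring

lemma measurePreserving_swap_μS2 :
    MeasurePreserving Prod.swap (μS2 n a₁ a₂) (μS2 n a₂ a₁) := by
  let e : (Rn n × Rn n) ≃ᵢ (Rn n × Rn n) := ⟨Equiv.prodComm _ _, fun p q ↦ max_comm _ _⟩
  have hpre : e ⁻¹' S2 n a₂ a₁ = S2 n a₁ a₂ := by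
    ext p
    exact (add_comm _ _).congr_left
  have hmass : μH[2 * (n : ℝ) - 1] (S2 n a₁ a₂) = μH[2 * (n : ℝ) - 1] (S2 n a₂ a₁) := by
    rw [← hpre, e.hausdorffMeasure_preimage]
  have hrestrict := (e.measurePreserving_hausdorffMeasure (2 * (n : ℝ) - 1)).restrict_preimage_emb
    e.toHomeomorph.measurableEmbedding (S2 n a₂ a₁)
  rw [hpre] at hrestrict
  rw [μS2, μS2, hmass]
  exact hrestrict.smul_measure _

lemma biAvgE_swap (f g : Rn n → ℝ) (t₁ t₂ : ℝ) (x : Rn n) :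
    biAvgE n a₁ a₂ f g t₁ t₂ x = biAvgE n a₂ a₁ g f t₂ t₁ x := by
  rw [biAvgE, biAvgE, ← measurePreserving_swap_μS2.lintegral_comp_emb
    MeasurableEquiv.prodComm.measurableEmbedding]
  exact lintegral_congr fun p ↦ mul_comm _ _

lemma biMaxE_swap (f g : Rn n → ℝ) (x : Rn n) :
    biMaxE n a₁ a₂ f g x = biMaxE n a₂ a₁ g f x := by
  simp only [biMaxE, biAvgE_swap (a₁ := a₁) f g]
  exact iSup₂_comm _

end Averages

/-- In the non-degenerate range `a₁, a₂ ≤ n`, the bilinear maximal function is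
pointwise dominated by products of the Hardy–Littlewood and spherical maximal functions. -/
theorem bilinear_maximal_pointwise_domination
    (n : ℕ) (hn : 2 ≤ n) (a₁ a₂ : ℝ) (ha₁ : 1 ≤ a₁) (ha₂ : 1 ≤ a₂)
    (ha₁n : a₁ ≤ n) (ha₂n : a₂ ≤ n) :
    ∃ C : ℝ≥0, ∀ f g : Rn n → ℝ,
      Measurable f → Measurable g → (∀ y, 0 ≤ f y) → (∀ y, 0 ≤ g y) →
      ∀ x : Rn n,
        biMaxE n a₁ a₂ f g x ≤ (C : ℝ≥0∞) * HLMax n f x * sphMax n g x ∧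
        biMaxE n a₁ a₂ f g x ≤ (C : ℝ≥0∞) * sphMax n f x * HLMax n g x := by
  obtain ⟨C₁, h₁⟩ := exists_biMaxE_le_mul_HLMax_mul_sphMax hn ha₁ ha₂ ha₂n
  obtain ⟨C₂, h₂⟩ := exists_biMaxE_le_mul_HLMax_mul_sphMax hn ha₂ ha₁ ha₁n
  refine ⟨max C₁ C₂, fun f g hf hg _ _ x ↦ ⟨?_, ?_⟩⟩
  · grw [h₁ f g hf hg x, ← le_max_left C₁ C₂]
  · grw [biMaxE_swap, h₂ g f hg hf x, mul_right_comm, ← le_max_right C₁ C₂]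
end
end
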